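/- For fixed ρ > 0, liminf_{n→∞} ( n^{1/2} D_S ) ≥ (8 π g_S(ρ))^{−1/2}. -/

import Mathlib

open MeasureTheory ProbabilityTheory Filter Set Metric
open scoped ENNReal NNReal BigOperators Topology Classical

noncomputable section

/-- Side length `n^(1/d)` of the cube `C_n` of volume `n` in dimension `d`. -/
def sideLen (d n : ℕ) : ℝ := (n : ℝ) ^ ((d : ℝ)⁻¹)

/-- The cube `C_n = [0, L)^d`. -/
def box (d : ℕ) (L : ℝ) : Set (Fin d → ℝ) := Set.univ.pi fun _ => Set.Ico (0 : ℝ) L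

/-- The Euclidean toroidal distance on the cube `[0, L)^d`. -/
def torDist {d : ℕ} (L : ℝ) (x y : Fin d → ℝ) : ℝ :=
  Real.sqrt (∑ i, (⨅ k : ℤ, |x i - y i - k * L|) ^ 2)

/-- The toroidal ball `B_r(x) = {y ∈ C_n : D(x,y) ≤ r}`. -/
def torBall {d : ℕ} (L : ℝ) (x : Fin d → ℝ) (r : ℝ) : Set (Fin d → ℝ) :=
  {y ∈ box d L | torDist L x y ≤ r}

/-- Addition (translation) in the torus `[0, L)^d`. -/
def torAdd {d : ℕ} (L : ℝ) (y x : Fin d → ℝ) : Fin d → ℝ :=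
  fun i => L * Int.fract ((y i + x i) / L)

/-- The uniform probability measure on the cube `[0, L)^d`. -/
def uniformBox (d : ℕ) (L : ℝ) : Measure (Fin d → ℝ) :=
  ((L.toNNReal ^ d)⁻¹ : ℝ≥0) • volume.restrict (box d L)

/-- The joint law of `n` independent points uniformly distributed on the cube `C_n`
of volume `n`; a point configuration is `ω : Fin n → (Fin d → ℝ)`, with `U_i = ω i`. -/
def binppLaw (d n : ℕ) : Measure (Fin n → Fin d → ℝ) :=
  Measure.pi fun _ => uniformBox d (sideLen d n)

/-- The total covered volume `V` of the union of toroidal balls of radius `ρ`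
centered at the `n` points. -/
def coveredVol (d n : ℕ) (ρ : ℝ) (ω : Fin n → Fin d → ℝ) : ℝ :=
  (volume (⋃ i, torBall (sideLen d n) (ω i) ρ)).toReal

/-- The number `S` of isolated points: indices `i` with `𝒰_n ∩ B_ρ(U_i) = {U_i}`. -/
def isolCount (d n : ℕ) (ρ : ℝ) (ω : Fin n → Fin d → ℝ) : ℝ :=
  ∑ i, if Set.range ω ∩ torBall (sideLen d n) (ω i) ρ = {ω i} then 1 else 0

/-- `π_d`: the volume of the unit ball in `ℝ^d`. -/
def unitBallVol (d : ℕ) : ℝ :=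
  (volume (Metric.closedBall (0 : EuclideanSpace ℝ (Fin d)) 1)).toReal

/-- `φ = π_d ρ^d`. -/
def phi (d : ℕ) (ρ : ℝ) : ℝ := unitBallVol d * ρ ^ d

/-- The standard normal cumulative distribution function. -/
def stdGaussCDF (t : ℝ) : ℝ := (gaussianReal 0 1 (Set.Iic t)).toReal

/-- The Kolmogorov distance `D_X` between the law of the standardized version of `X`
and the standard normal. -/
def kolDist {Ω : Type*} [MeasurableSpace Ω] (P : Measure Ω) (X : Ω → ℝ) : ℝ :=
  ⨆ t : ℝ,
    |(P {ω | (X ω - ∫ x, X x ∂P) / Real.sqrt (variance X P) ≤ t}).toReal - stdGaussCDF t|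

/-- A fixed unit vector in `ℝ^d` (junk value `0` if `d = 0`). -/
def unitVec (d : ℕ) : EuclideanSpace ℝ (Fin d) :=
  if h : 0 < d then EuclideanSpace.single (⟨0, h⟩ : Fin d) 1 else 0

/-- `ω_d(r)`: the volume of the union of two unit balls in `ℝ^d` whose centers are
at distance `r` apart. -/
def omegaVol (d : ℕ) (r : ℝ) : ℝ :=
  (volume (Metric.closedBall (0 : EuclideanSpace ℝ (Fin d)) 1 ∪
      Metric.closedBall (r • unitVec d) 1)).toReal

/-- The integral `J_{r,d}(ρ) = d π_d ∫_0^r exp(-ρ^d ω_d(t)) t^{d-1} dt`. -/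
def Jint (r : ℝ) (d : ℕ) (ρ : ℝ) : ℝ :=
  d * unitBallVol d * ∫ t in (0:ℝ)..r, Real.exp (-(ρ ^ d * omegaVol d t)) * t ^ (d - 1)

/-- The limiting variance density `g_V(ρ)`. -/
def gV (d : ℕ) (ρ : ℝ) : ℝ :=
  ρ ^ d * Jint 2 d ρ - (2 ^ d * phi d ρ + phi d ρ ^ 2) * Real.exp (-(2 * phi d ρ))

/-- The limiting variance density `g_S(ρ)`. -/
def gS (d : ℕ) (ρ : ℝ) : ℝ :=
  Real.exp (-phi d ρ) - (1 + (2 ^ d - 2) * phi d ρ + phi d ρ ^ 2) * Real.exp (-(2 * phi d ρ))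
    + ρ ^ d * (Jint 2 d ρ - Jint 1 d ρ)

/-- `κ_d`: the maximum number of closed unit balls in `ℝ^d` that can be packed so that
they all intersect a closed unit ball at the origin but are pairwise disjoint. -/
def kappa (d : ℕ) : ℕ :=
  sSup {k : ℕ | ∃ c : Fin k → EuclideanSpace ℝ (Fin d),
    (∀ i, (Metric.closedBall (c i) 1 ∩ Metric.closedBall 0 1).Nonempty) ∧
    Pairwise fun i j => Disjoint (Metric.closedBall (c i) 1) (Metric.closedBall (c j) 1)}

/-- `η_V(n, ρ)`. -/
def etaV (d n : ℕ) (ρ : ℝ) : ℝ :=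
  2 * phi d ρ ^ 2 * ((3 ^ d + 1) * phi d ρ + 1) ^ 2 *
      (1 + (2 ^ d + 1) * 6 ^ d * phi d ρ +
        ((2 * n - 6 ^ d * phi d ρ) / (n - 6 ^ d * phi d ρ)) * 6 ^ (2 * d) * phi d ρ ^ 2) +
    2 * phi d ρ ^ 4 *
      (3 * (4 ^ d + 2 ^ d) * phi d ρ +
        3 * 4 ^ d * phi d ρ ^ 2 * ((2 * n - 3 * 2 ^ d * phi d ρ) / (n - 3 * 2 ^ d * phi d ρ)) +
        4 + 2 / n)

/-- `η_S(n, ρ)`. -/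
def etaS (d n : ℕ) (ρ : ℝ) : ℝ :=
  2 * (1 + 2 * (kappa d : ℝ)) ^ 2 *
      (1 + (2 ^ d + 1) * 3 ^ d * phi d ρ +
        ((2 * n - 3 ^ d * phi d ρ) / (n - 3 ^ d * phi d ρ)) * 9 ^ d * phi d ρ ^ 2) +
    (((1 : ℝ) + kappa d) ^ 2 / 2) *
      ((2 ^ d + 2 * 3 ^ d + 3) * phi d ρ +
        (2 ^ (d + 1) + 1) *
          ((2 * n - (2 ^ (d + 1) + 1) * phi d ρ) / (n - (2 ^ (d + 1) + 1) * phi d ρ)) *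
          phi d ρ ^ 2 +
        (4 * n - 2) / (n - 1))

def gw (x : ℝ) : ℝ := Real.exp (-(x ^ 2 / 2))

lemma gw_pos (x : ℝ) : 0 < gw x := Real.exp_pos _

lemma gw_cont : Continuous gw := by unfold gw; fun_prop

lemma gw_integrable : Integrable gw := by
  have := integrable_exp_neg_mul_sq (b := 1/2) (by norm_num)
  refine this.congr (Eventually.of_forall fun x => ?_)
  simp only [gw]; congr 1; ring

lemma gw_integral : ∫ x, gw x = Real.sqrt (2 * Real.pi) := by
  have := integral_gaussian (1/2)
  rw [show (2 * Real.pi) = Real.pi / (1/2) by ring, ← this]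
  congr 1; ext x; simp only [gw]; congr 1; ring

lemma gw_hasDeriv (x : ℝ) : HasDerivAt (fun x => -gw x) (x * gw x) x := by
  unfold gw
  have : HasDerivAt (fun x : ℝ => -(x^2/2)) (-x) x := by
    have := ((hasDerivAt_pow 2 x).div_const 2).neg
    refine this.congr_deriv ?_
    simp
  refine this.exp.neg.congr_deriv ?_
  ring

lemma gw_tendsto : Tendsto gw atTop (𝓝 0) := by
  unfold gw
  refine Real.tendsto_exp_atBot.comp (tendsto_neg_atTop_atBot.comp ?_)
  exact (tendsto_pow_atTop (by norm_num)).atTop_div_const (by norm_num)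

lemma gw_mul_integrable : Integrable (fun x => x * gw x) := by
  have := integrable_mul_exp_neg_mul_sq (b := 1/2) (by norm_num)
  refine this.congr (Eventually.of_forall fun x => ?_)
  simp only [gw]; congr 2; ring

lemma gw_mills (w : ℝ) (hw : 0 ≤ w) : w * ∫ x in Ioi w, gw x ≤ gw w := by
  have h1 : ∫ x in Ioi w, x * gw x = gw w := by
    rw [integral_Ioi_of_hasDerivAt_of_tendsto' (fun x _ => gw_hasDeriv x)
      gw_mul_integrable.integrableOn (by simpa using gw_tendsto.neg)]
    simp
  rw [← h1, ← integral_const_mul]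
  refine setIntegral_mono_on (gw_integrable.const_mul _).integrableOn gw_mul_integrable.integrableOn
    measurableSet_Ioi fun x hx => ?_
  exact mul_le_mul_of_nonneg_right (le_of_lt hx) (gw_pos x).le

lemma gw_tail (w : ℝ) : ∫ x in Ioi w, gw x ≤ 3 := by
  calc ∫ x in Ioi w, gw x ≤ ∫ x, gw x := setIntegral_le_integral gw_integrable
        (Eventually.of_forall fun x => (gw_pos x).le)
    _ = Real.sqrt (2 * Real.pi) := gw_integral
    _ ≤ 3 := by
      rw [Real.sqrt_le_left (by norm_num)]
      have := Real.pi_lt_d2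
      linarith

lemma gw_inv (w : ℝ) : Real.exp (w^2/2) * gw w = 1 := by
  unfold gw; rw [← Real.exp_add]; simp

lemma gw_M1 (w : ℝ) (hw : 0 ≤ w) : w * (Real.exp (w^2/2) * ∫ x in Ioi w, gw x) ≤ 1 := by
  have := mul_le_mul_of_nonneg_left (gw_mills w hw) (Real.exp_pos (w^2/2)).le
  rw [gw_inv] at this; linarith

lemma gw_M2 (w : ℝ) (hw : 0 ≤ w) : (Real.exp (w^2/2) * ∫ x in Ioi w, gw x) ≤ 6 := by
  have hn : 0 ≤ ∫ x in Ioi w, gw x := integral_nonneg fun x => (gw_pos x).le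
  rcases le_total 1 w with h | h
  · have := gw_M1 w hw
    have h2 : 0 ≤ (Real.exp (w^2/2) * ∫ x in Ioi w, gw x) := by positivity
    nlinarith
  · have h1 : Real.exp (w^2/2) ≤ 2 := by
      have : Real.exp (w^2/2) ≤ Real.exp (1/2) := Real.exp_le_exp.2 (by nlinarith)
      have h3 : Real.exp (1/2) ^ 2 ≤ 2 ^ 2 := by
        rw [← Real.exp_nat_mul]
        have := Real.exp_one_lt_d9
        norm_num at *
        linarith
      have := abs_le_of_sq_le_sq' h3 (by norm_num)
      linarith [this.2]
    have := mul_le_mul h1 (gw_tail w) hn (by norm_num)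
    linarith

lemma gw_symm (w : ℝ) : ∫ x in Iic w, gw x = ∫ x in Ioi (-w), gw x := by
  rw [← integral_comp_neg_Iic]
  simp [gw]

/-- Stein solution. -/
lemma stein_exists (h : ℝ → ℝ) (hc : Continuous h) (h0 : ∀ x, 0 ≤ h x) (h1 : ∀ x, h x ≤ 1) :
    ∃ f f' : ℝ → ℝ, (∀ w, HasDerivAt f (f' w) w) ∧
      (∀ w, f' w - w * f w = h w - ∫ x, h x ∂(gaussianReal 0 1)) ∧
      (∀ w, |f w| ≤ 6) ∧ (∀ w, |f' w| ≤ 2) := by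
  set c := ∫ x, h x ∂(gaussianReal 0 1) with hcdef
  have hint : Integrable h (gaussianReal 0 1) :=
    Integrable.of_bound hc.aestronglyMeasurable 1
      (Eventually.of_forall fun x => by rw [Real.norm_eq_abs, abs_of_nonneg (h0 x)]; exact h1 x)
  have c0 : 0 ≤ c := integral_nonneg h0
  have c1 : c ≤ 1 := by
    calc c ≤ ∫ x, (1:ℝ) ∂(gaussianReal 0 1) := integral_mono hint (integrable_const _) h1
      _ = 1 := by simp
  have hb : ∀ x, |h x - c| ≤ 1 := fun x => by
    rw [abs_le]; constructor <;> linarith [h0 x, h1 x]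
  set k : ℝ → ℝ := fun x => (h x - c) * gw x with hk
  have kc : Continuous k := (hc.sub continuous_const).mul gw_cont
  have kb : ∀ x, ‖k x‖ ≤ gw x := fun x => by
    rw [hk, Real.norm_eq_abs, abs_mul, abs_of_pos (gw_pos x)]
    exact mul_le_of_le_one_left (gw_pos x).le (hb x)
  have ki : Integrable k := gw_integrable.mono' kc.aestronglyMeasurable (Eventually.of_forall kb)
  have ktot : ∫ x, k x = 0 := by
    have e1 : c = (Real.sqrt (2 * Real.pi))⁻¹ * ∫ x, gw x * h x := by
      rw [hcdef, integral_gaussianReal_eq_integral_smul (by norm_num), ← integral_const_mul]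
      congr 1; ext x
      simp [gaussianPDFReal, gw]
      ring_nf
    have hgi : Integrable (fun x => gw x * h x) :=
      gw_integrable.mono' (gw_cont.mul hc).aestronglyMeasurable (Eventually.of_forall fun x => by
        rw [Real.norm_eq_abs, abs_mul, abs_of_pos (gw_pos x), abs_of_nonneg (h0 x)]
        exact mul_le_of_le_one_right (gw_pos x).le (h1 x))
    have e2 : ∫ x, k x = (∫ x, gw x * h x) - c * ∫ x, gw x := by
      rw [← integral_const_mul, ← integral_sub hgi (gw_integrable.const_mul _)]
      congr 1; ext x; simp only [hk]; ring
    rw [e2, gw_integral, e1]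
    have : Real.sqrt (2 * Real.pi) ≠ 0 := by positivity
    field_simp
    ring
  set F : ℝ → ℝ := fun w => ∫ x in Iic w, k x with hF
  have Fd : ∀ w, HasDerivAt F (k w) w := by
    intro w
    have e : F = fun w => F 0 + ∫ x in (0:ℝ)..w, k x := by
      ext w
      rw [hF, intervalIntegral.integral_Iic_sub_Iic ki.integrableOn ki.integrableOn |>.symm]
      ring
    rw [e]
    have := intervalIntegral.integral_hasDerivAt_right (a := 0) (b := w) ki.intervalIntegrable
      (kc.stronglyMeasurableAtFilter _ _) kc.continuousAt
    exact this.const_add _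
  have Fb1 : ∀ w, |F w| ≤ ∫ x in Iic w, gw x := fun w =>
    (norm_integral_le_integral_norm _).trans
      (integral_mono ki.norm.integrableOn gw_integrable.integrableOn kb)
  have Fb2 : ∀ w, |F w| ≤ ∫ x in Ioi w, gw x := fun w => by
    have : F w = - ∫ x in Ioi w, k x := by
      have := intervalIntegral.integral_Iic_add_Ioi (b := w) ki.integrableOn ki.integrableOn
      simp only [hF]; rw [ktot] at this; linarith
    rw [this, abs_neg]
    exact (norm_integral_le_integral_norm _).trans
      (integral_mono ki.norm.integrableOn gw_integrable.integrableOn kb)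
  have Fb : ∀ w, |F w| ≤ ∫ x in Ioi |w|, gw x := fun w => by
    rcases le_total 0 w with hw | hw
    · rw [abs_of_nonneg hw]; exact Fb2 w
    · rw [abs_of_nonpos hw, ← gw_symm]; exact Fb1 w
  set f : ℝ → ℝ := fun w => Real.exp (w^2/2) * F w with hf
  have fb : ∀ w, |f w| ≤ Real.exp (|w|^2/2) * ∫ x in Ioi |w|, gw x := fun w => by
    rw [hf, abs_mul, abs_of_pos (Real.exp_pos _), sq_abs]
    exact mul_le_mul_of_nonneg_left (Fb w) (Real.exp_pos _).le
  refine ⟨f, fun w => w * f w + (h w - c), fun w => ?_, fun w => by ring, fun w => ?_, fun w => ?_⟩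
  · have e : HasDerivAt (fun w : ℝ => Real.exp (w^2/2)) (Real.exp (w^2/2) * w) w := by
      have : HasDerivAt (fun x : ℝ => (x^2/2)) (x := w) w := by
        refine ((hasDerivAt_pow 2 w).div_const 2).congr_deriv ?_
        simp
      exact this.exp
    refine (e.mul (Fd w)).congr_deriv ?_
    have := gw_inv w
    simp only [hf, hk]
    linear_combination (h w - c) * this
  · exact (fb w).trans (gw_M2 _ (abs_nonneg w))
  · have a1 : |w * f w| ≤ 1 := by
      rw [abs_mul]
      exact (mul_le_mul_of_nonneg_left (fb w) (abs_nonneg w)).trans (gw_M1 _ (abs_nonneg w))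
    have := abs_add_le (w * f w) (h w - c)
    have := hb w
    show |w * f w + (h w - c)| ≤ 2
    linarith

def ramp (z α w : ℝ) : ℝ := max 0 (min 1 (1 + (z - w) / α))

lemma ramp_cont (z α : ℝ) : Continuous (ramp z α) := by unfold ramp; fun_prop

lemma ramp_nonneg (z α w : ℝ) : 0 ≤ ramp z α w := le_max_left _ _

lemma ramp_le_one (z α w : ℝ) : ramp z α w ≤ 1 := max_le zero_le_one (min_le_left _ _)

lemma ramp_one (z α w : ℝ) (hα : 0 < α) (h : w ≤ z) : ramp z α w = 1 := by
  unfold ramp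
  have : 0 ≤ (z - w) / α := div_nonneg (by linarith) hα.le
  rw [min_eq_left (by linarith), max_eq_right zero_le_one]

lemma ramp_zero (z α w : ℝ) (hα : 0 < α) (h : z + α ≤ w) : ramp z α w = 0 := by
  unfold ramp
  have : (z - w) / α ≤ -1 := by rw [div_le_iff₀ hα]; linarith
  exact max_eq_left ((min_le_right _ _).trans (by linarith))

lemma ramp_lip (z α w v : ℝ) (hα : 0 < α) : |ramp z α w - ramp z α v| ≤ |w - v| / α := by
  unfold ramp
  refine (abs_max_sub_max_le_max _ _ _ _).trans ?_
  rw [sub_self, abs_zero, max_eq_right (abs_nonneg _)]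
  refine (abs_min_sub_min_le_max _ _ _ _).trans ?_
  rw [sub_self, abs_zero, max_eq_right (abs_nonneg _)]
  rw [show 1 + (z - w) / α - (1 + (z - v) / α) = (v - w) / α by ring, abs_div, abs_of_pos hα,
    abs_sub_comm]

lemma ramp_diff (z α w v δ : ℝ) (hα : 0 < α) (hδ : 0 < δ) (h : |w - v| ≤ δ) :
    |ramp z α w - ramp z α v| ≤
      (δ / α) * (Ioc (z - 2 * δ) (z + α + δ)).indicator (fun _ => (1:ℝ)) w := by
  have h' := abs_le.1 h
  by_cases hw : w ∈ Ioc (z - 2 * δ) (z + α + δ)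
  · rw [indicator_of_mem hw, mul_one]
    exact (ramp_lip z α w v hα).trans (by gcongr)
  · rw [indicator_of_notMem hw, mul_zero]
    rw [mem_Ioc, not_and_or, not_lt, not_le] at hw
    rcases hw with hw | hw
    · rw [ramp_one _ _ _ hα (by linarith), ramp_one _ _ _ hα (by linarith)]; simp
    · rw [ramp_zero _ _ _ hα (by linarith), ramp_zero _ _ _ hα (by linarith)]; simp

lemma gcdf_diff {a b : ℝ} (hab : a ≤ b) :
    stdGaussCDF b - stdGaussCDF a = ∫ x in Ioc a b, gaussianPDFReal 0 1 x := by
  unfold stdGaussCDF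
  rw [gaussianReal_apply_eq_integral _ (by norm_num), gaussianReal_apply_eq_integral _ (by norm_num),
    ENNReal.toReal_ofReal (integral_nonneg fun x => gaussianPDFReal_nonneg _ _ _),
    ENNReal.toReal_ofReal (integral_nonneg fun x => gaussianPDFReal_nonneg _ _ _),
    intervalIntegral.integral_Iic_sub_Iic (integrable_gaussianPDFReal _ _).integrableOn
      (integrable_gaussianPDFReal _ _).integrableOn, intervalIntegral.integral_of_le hab]

lemma gpdf_eq (x : ℝ) : gaussianPDFReal 0 1 x = (Real.sqrt (2 * Real.pi))⁻¹ * gw x := by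
  simp [gaussianPDFReal, gw]; left; ring_nf

lemma gpdf_le (x : ℝ) : gaussianPDFReal 0 1 x ≤ 1 := by
  rw [gpdf_eq]
  have h1 : gw x ≤ 1 := by
    unfold gw; rw [Real.exp_le_one_iff]; nlinarith [sq_nonneg x]
  have h2 : (Real.sqrt (2 * Real.pi))⁻¹ ≤ 1 := by
    apply inv_le_one_of_one_le₀
    rw [Real.one_le_sqrt]
    linarith [Real.pi_gt_three]
  exact mul_le_one₀ h2 (gw_pos x).le h1

lemma gcdf_lip {a b : ℝ} (hab : a ≤ b) : stdGaussCDF b - stdGaussCDF a ≤ b - a := by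
  rw [gcdf_diff hab]
  calc _ ≤ ∫ x in Ioc a b, (1:ℝ) := by
        refine setIntegral_mono (integrable_gaussianPDFReal _ _).integrableOn ?_ gpdf_le
        simp
    _ = b - a := by simp [hab]

lemma gcdf_lower {a b s : ℝ} (hab : a ≤ b) (ha : -s ≤ a) (hb : b ≤ s) :
    (b - a) * ((Real.sqrt (2 * Real.pi))⁻¹ * gw s) ≤ stdGaussCDF b - stdGaussCDF a := by
  rw [gcdf_diff hab]
  calc _ = ∫ x in Ioc a b, ((Real.sqrt (2 * Real.pi))⁻¹ * gw s) := by simp [hab]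
    _ ≤ _ := by
      refine setIntegral_mono_on (integrable_const _) (integrable_gaussianPDFReal _ _).integrableOn
        measurableSet_Ioc fun x hx => ?_
      rw [gpdf_eq]
      refine mul_le_mul_of_nonneg_left ?_ (by positivity)
      unfold gw
      rw [Real.exp_le_exp]
      have : x^2 ≤ s^2 := sq_le_sq' (by linarith [hx.1]) (by linarith [hx.2])
      linarith

lemma halving (a : ℝ → ℝ) (E : ℝ) (h1 : ∀ t, a t ≤ 1)
    (h : ∀ D, (∀ t, a t ≤ D) → ∀ t, a t ≤ D / 2 + E) : ∀ t, a t ≤ 2 * E := by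
  have hb : BddAbove (range a) := ⟨1, by rintro _ ⟨t, rfl⟩; exact h1 t⟩
  have h2 : iSup a ≤ iSup a / 2 + E := ciSup_le (h _ (le_ciSup hb))
  intro t
  have := le_ciSup hb t
  linarith

/-- Taylor remainder estimate for the Stein solution. -/
lemma stein_rem (f f' : ℝ → ℝ) (z α δ c : ℝ) (hα : 0 < α) (hδ : 0 < δ)
    (hd : ∀ w, HasDerivAt f (f' w) w) (he : ∀ w, f' w - w * f w = ramp z α w - c)
    (hf : ∀ w, |f w| ≤ 6) (hf' : ∀ w, |f' w| ≤ 2) (w v : ℝ) (hwv : |w - v| ≤ δ) :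
    |f w - f v - (w - v) * f' w| ≤ δ * (δ * (6 + 2 * |w|) +
      (δ / α) * (Ioc (z - 2 * δ) (z + α + δ)).indicator (fun _ => (1:ℝ)) w) := by
  have lip : ∀ x y, |f x - f y| ≤ 2 * |x - y| := by
    intro x y
    have := Convex.norm_image_sub_le_of_norm_hasDerivWithin_le (f := f) (f' := f') (C := 2)
      (s := univ) (x := y) (y := x)
      (fun x _ => (hd x).hasDerivWithinAt) (fun x _ => hf' x) convex_univ (mem_univ _) (mem_univ _)
    exact this
  have key : ∀ x, |w - x| ≤ δ → |f' w - f' x| ≤ δ * (6 + 2 * |w|) +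
      (δ / α) * (Ioc (z - 2 * δ) (z + α + δ)).indicator (fun _ => (1:ℝ)) w := by
    intro x hx
    have e : f' w - f' x = (w - x) * f x + w * (f w - f x) + (ramp z α w - ramp z α x) := by
      have := he w; have := he x; linarith
    rw [e]
    have a1 : |(w - x) * f x| ≤ δ * 6 := by
      rw [abs_mul]; exact mul_le_mul hx (hf x) (abs_nonneg _) hδ.le
    have a2 : |w * (f w - f x)| ≤ |w| * (2 * δ) := by
      rw [abs_mul]; exact mul_le_mul_of_nonneg_left ((lip w x).trans (by linarith)) (abs_nonneg _)
    have a3 := ramp_diff z α w x δ hα hδ hx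
    have := abs_add_three ((w - x) * f x) (w * (f w - f x)) (ramp z α w - ramp z α x)
    linarith
  -- apply the mean value inequality to `g x = f x - x * f' w`
  have := Convex.norm_image_sub_le_of_norm_hasDerivWithin_le (f := fun x => f x - x * f' w)
      (f' := fun x => f' x - f' w) (C := δ * (6 + 2 * |w|) +
      (δ / α) * (Ioc (z - 2 * δ) (z + α + δ)).indicator (fun _ => (1:ℝ)) w)
      (s := uIcc w v) (x := v) (y := w)
      (fun x _ => by
        have := ((hd x).sub ((hasDerivAt_id x).mul_const (f' w))).hasDerivWithinAt (s := uIcc w v)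
        rw [one_mul] at this
        exact this)
      (fun x hx => by
        rw [Real.norm_eq_abs, abs_sub_comm]
        refine key x ?_
        rw [abs_sub_comm]
        exact (abs_sub_left_of_mem_uIcc hx).trans (by rwa [abs_sub_comm])) (convex_uIcc _ _)
      right_mem_uIcc left_mem_uIcc
  rw [Real.norm_eq_abs, Real.norm_eq_abs] at this
  have e : f w - w * f' w - (f v - v * f' w) = f w - f v - (w - v) * f' w := by ring
  rw [e] at this
  refine this.trans ?_
  rw [mul_comm]
  refine mul_le_mul_of_nonneg_right hwv ?_
  have : 0 ≤ (Ioc (z - 2 * δ) (z + α + δ)).indicator (fun _ => (1:ℝ)) w :=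
    indicator_nonneg (fun _ _ => zero_le_one) _
  positivity

lemma integral_indicator_comp {Ω : Type*} [MeasurableSpace Ω] (P : Measure Ω)
    [IsProbabilityMeasure P] (W : Ω → ℝ) (hW : Measurable W) (s : Set ℝ) (hs : MeasurableSet s) :
    ∫ ω, s.indicator (fun _ => (1:ℝ)) (W ω) ∂P = P.real (W ⁻¹' s) := by
  have : (fun ω => s.indicator (fun _ => (1:ℝ)) (W ω)) = (W ⁻¹' s).indicator 1 := by
    ext ω; simp [indicator]
  rw [this, integral_indicator_one (hW hs)]

lemma BE_smooth {Ω : Type*} [MeasurableSpace Ω] (P : Measure Ω) [IsProbabilityMeasure P]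
    (n : ℕ) (S : Ω → ℝ) (hS : Measurable S) (m σ B A M : ℝ)
    (D Sj : Fin n → Ω → ℝ) (hD : ∀ j, Measurable (D j)) (hSj : ∀ j, Measurable (Sj j))
    (hB : 0 < B) (hDB : ∀ j ω, |D j ω| ≤ B) (hSB : ∀ j ω, |S ω - Sj j ω| ≤ B) (hσ : 0 < σ)
    (hM : ∀ ω, |S ω - m| ≤ M) (hvar : ∫ ω, (S ω - m) ^ 2 ∂P = σ ^ 2)
    (hid : ∀ F : ℝ → ℝ, Measurable F → ∀ C, (∀ x, |F x| ≤ C) →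
      ∫ ω, (S ω - m) * F (S ω) ∂P = ∑ j, (1/2) * ∫ ω, D j ω * (F (S ω) - F (Sj j ω)) ∂P)
    (hT : ∫ ω, ((∑ j, (1/2) * (D j ω * (S ω - Sj j ω))) - σ ^ 2) ^ 2 ∂P ≤ A * n)
    (z α : ℝ) (hα : 0 < α) :
    |∫ ω, ramp z α ((S ω - m) / σ) ∂P - ∫ x, ramp z α x ∂(gaussianReal 0 1)| ≤
      2 * Real.sqrt (A * n) / σ ^ 2 + n * (1/2) * (B / σ) ^ 3 * (8 + (1 / α) *
        P.real {ω | (S ω - m) / σ ∈ Ioc (z - 2 * (B / σ)) (z + α + B / σ)}) := by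
  obtain ⟨f, f', hd, he, hf, hf'⟩ := stein_exists (ramp z α) (ramp_cont z α) (ramp_nonneg z α)
    (ramp_le_one z α)
  set c := ∫ x, ramp z α x ∂(gaussianReal 0 1) with hc
  set δ := B / σ with hδ
  have δ0 : 0 < δ := div_pos hB hσ
  set W : Ω → ℝ := fun ω => (S ω - m) / σ with hW
  set Wj : Fin n → Ω → ℝ := fun j ω => (Sj j ω - m) / σ with hWj
  have Wm : Measurable W := (hS.sub_const m).div_const σ
  have Wjm : ∀ j, Measurable (Wj j) := fun j => ((hSj j).sub_const m).div_const σ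
  have fm : Measurable f := (continuous_iff_continuousAt.2 fun w => (hd w).continuousAt).measurable
  have f'm : Measurable f' := by
    have : f' = fun w => w * f w + ramp z α w - c := by ext w; linarith [he w]
    rw [this]
    exact ((measurable_id.mul fm).add (ramp_cont z α).measurable).sub_const c
  set T : Ω → ℝ := fun ω => ∑ j, (1/2) * (D j ω * (S ω - Sj j ω)) with hTd
  have Tm : Measurable T := by
    refine Finset.measurable_sum _ fun j _ => ((hD j).mul (hS.sub (hSj j))).const_mul _
  have Tb : ∀ ω, |T ω| ≤ n * ((1/2) * (B * B)) := by
    intro ω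
    refine (Finset.abs_sum_le_sum_abs _ _).trans ?_
    calc _ ≤ ∑ j : Fin n, ((1/2) * (B * B)) := by
          refine Finset.sum_le_sum fun j _ => ?_
          rw [abs_mul, abs_mul, abs_of_pos (by norm_num : (0:ℝ) < 1/2)]
          gcongr
          · exact hDB j ω
          · exact hSB j ω
      _ = _ := by simp
  have bint : ∀ (g : Ω → ℝ), Measurable g → ∀ C, (∀ ω, |g ω| ≤ C) → Integrable g P :=
    fun g hg C h => Integrable.of_bound hg.aestronglyMeasurable C (Eventually.of_forall h)
  have Wb : ∀ ω, |W ω| ≤ M / σ := fun ω => by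
    simp only [hW]; rw [abs_div, abs_of_pos hσ]; exact div_le_div_of_nonneg_right (hM ω) hσ.le
  have Wint : Integrable W P := bint W Wm _ Wb
  have W2 : ∫ ω, W ω ^ 2 ∂P = 1 := by
    have : (fun ω => W ω ^ 2) = fun ω => (1/σ^2) * (S ω - m)^2 := by
      ext ω; simp only [hW]; rw [div_pow]; ring
    rw [this, integral_const_mul, hvar]; field_simp
  have W2int : Integrable (fun ω => W ω ^ 2) P := bint _ (Wm.pow_const 2) ((M/σ)^2) fun ω => by
    rw [abs_pow]; exact pow_le_pow_left₀ (abs_nonneg _) (Wb ω) 2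
  have W1 : ∫ ω, |W ω| ∂P ≤ 1 := by
    have : ∫ ω, |W ω| ∂P ≤ ∫ ω, (1/2) * (W ω ^ 2 + 1) ∂P := by
      refine integral_mono Wint.abs ((W2int.add (integrable_const 1)).const_mul _) fun ω => ?_
      have := sq_nonneg (|W ω| - 1)
      rw [sub_sq, sq_abs] at this
      show |W ω| ≤ (1/2) * (W ω ^ 2 + 1)
      linarith
    rw [integral_const_mul, integral_add W2int (integrable_const 1), W2] at this
    simp at this; linarith
  set I : ℝ → ℝ := (Ioc (z - 2 * δ) (z + α + δ)).indicator (fun _ => (1:ℝ)) with hI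
  have Im : Measurable I := measurable_const.indicator measurableSet_Ioc
  have I0 : ∀ x, 0 ≤ I x := fun x => indicator_nonneg (fun _ _ => zero_le_one) _
  have I1 : ∀ x, I x ≤ 1 := fun x => indicator_le_self' (fun _ _ => zero_le_one) _
  have EI : ∫ ω, I (W ω) ∂P = P.real {ω | W ω ∈ Ioc (z - 2 * δ) (z + α + δ)} :=
    integral_indicator_comp P W Wm _ measurableSet_Ioc
  have IWint : Integrable (fun ω => I (W ω)) P := bint _ (Im.comp Wm) 1 fun ω => by
    rw [abs_of_nonneg (I0 _)]; exact I1 _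
  -- remainder
  set R : Fin n → Ω → ℝ := fun j ω => f (W ω) - f (Wj j ω) - (W ω - Wj j ω) * f' (W ω) with hR
  have wdiff : ∀ j ω, W ω - Wj j ω = (S ω - Sj j ω) / σ := fun j ω => by
    simp only [hW, hWj]; ring
  have Rb : ∀ j ω, |R j ω| ≤ δ * (δ * (6 + 2 * |W ω|) + (δ / α) * I (W ω)) := fun j ω => by
    refine stein_rem f f' z α δ c hα δ0 hd he hf hf' _ _ ?_
    rw [wdiff, abs_div, abs_of_pos hσ]
    exact div_le_div_of_nonneg_right (hSB j ω) hσ.le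
  have fW : Measurable fun ω => f (W ω) := fm.comp Wm
  have f'W : Measurable fun ω => f' (W ω) := f'm.comp Wm
  have fWj : ∀ j, Measurable fun ω => f (Wj j ω) := fun j => fm.comp (Wjm j)
  -- identity
  have id1 : ∫ ω, W ω * f (W ω) ∂P =
      ∑ j, (1/2) * ∫ ω, D j ω / σ * (f (W ω) - f (Wj j ω)) ∂P := by
    have := hid (fun s => f ((s - m)/σ) / σ) ((fm.comp ((measurable_id.sub_const m).div_const σ)).div_const σ)
      (6/σ) (fun x => by rw [abs_div, abs_of_pos hσ]; exact div_le_div_of_nonneg_right (hf _) hσ.le)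
    convert this using 1
    · congr 1; ext ω; simp only [hW]; ring
    · congr 1; ext j; congr 2; ext ω; simp only [hW, hWj]; ring
  have Dint : ∀ j, Integrable (fun ω => D j ω / σ * (f (W ω) - f (Wj j ω))) P := fun j =>
    bint _ (((hD j).div_const σ).mul (fW.sub (fWj j))) (B / σ * (6 + 6)) fun ω => by
      rw [abs_mul, abs_div, abs_of_pos hσ]
      gcongr
      · exact hDB j ω
      · exact (abs_sub _ _).trans (add_le_add (hf _) (hf _))
  have id2 : ∫ ω, W ω * f (W ω) ∂P = ∫ ω, ∑ j, (1/2) * (D j ω / σ * (f (W ω) - f (Wj j ω))) ∂P := by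
    rw [id1, integral_finsetSum _ fun j _ => (Dint j).const_mul _]
    simp only [integral_const_mul]
  have Tf : Integrable (fun ω => (1 - T ω / σ^2) * f' (W ω)) P := by
    refine bint _ ((measurable_const.sub (Tm.div_const _)).mul f'W)
      ((1 + n * ((1/2) * (B * B)) / σ^2) * 2) fun ω => ?_
    rw [abs_mul]
    refine mul_le_mul ?_ (hf' _) (abs_nonneg _) (by positivity)
    refine (abs_sub _ _).trans ?_
    rw [abs_one, abs_div, abs_of_pos (pow_pos hσ 2)]
    gcongr
    exact Tb ω
  have f'int : Integrable (fun ω => f' (W ω)) P := bint _ f'W 2 fun ω => hf' _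
  have Wfint : Integrable (fun ω => W ω * f (W ω)) P := bint _ (Wm.mul fW) (M / σ * 6) fun ω => by
    rw [abs_mul]
    exact mul_le_mul (Wb ω) (hf _) (abs_nonneg _) ((abs_nonneg _).trans (Wb ω))
  have Rm : ∀ j, Measurable (R j) := fun j => (fW.sub (fWj j)).sub ((Wm.sub (Wjm j)).mul f'W)
  have bndInt : Integrable (fun ω => δ * (δ * (6 + 2 * |W ω|) + (δ / α) * I (W ω))) P :=
    ((((integrable_const (6:ℝ)).add (Wint.abs.const_mul 2)).const_mul δ).add
      (IWint.const_mul (δ/α))).const_mul δ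
  have DRint : ∀ j, Integrable (fun ω => D j ω / σ * R j ω) P := fun j => by
    refine (bndInt.const_mul δ).mono' (((hD j).div_const σ).mul (Rm j)).aestronglyMeasurable
      (Eventually.of_forall fun ω => ?_)
    rw [Real.norm_eq_abs, abs_mul, abs_div, abs_of_pos hσ]
    exact mul_le_mul (div_le_div_of_nonneg_right (hDB j ω) hσ.le) (Rb j ω) (abs_nonneg _) δ0.le
  have main : ∫ ω, ramp z α (W ω) ∂P - c =
      ∫ ω, (1 - T ω / σ^2) * f' (W ω) ∂P - ∫ ω, ∑ j, (1/2) * (D j ω / σ * R j ω) ∂P := by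
    have e1 : ∫ ω, ramp z α (W ω) ∂P - c = ∫ ω, f' (W ω) ∂P - ∫ ω, W ω * f (W ω) ∂P := by
      rw [← integral_sub f'int Wfint]
      have : (fun ω => f' (W ω) - W ω * f (W ω)) = fun ω => ramp z α (W ω) - c := by
        ext ω; exact he _
      rw [this, integral_sub (bint (fun ω => ramp z α (W ω)) ((ramp_cont z α).measurable.comp Wm) 1 fun ω => by
        rw [abs_of_nonneg (ramp_nonneg _ _ _)]; exact ramp_le_one _ _ _) (integrable_const _)]
      simp
    rw [e1, id2, ← integral_sub f'int (integrable_finsetSum _ fun j _ => (Dint j).const_mul _),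
      ← integral_sub Tf (integrable_finsetSum _ fun j _ => (DRint j).const_mul _)]
    congr 1; ext ω
    have : ∑ j, (1/2) * (D j ω / σ * (f (W ω) - f (Wj j ω))) =
        T ω / σ^2 * f' (W ω) + ∑ j, (1/2) * (D j ω / σ * R j ω) := by
      simp only [hTd]
      rw [Finset.sum_div, Finset.sum_mul, ← Finset.sum_add_distrib]
      refine Finset.sum_congr rfl fun j _ => ?_
      simp only [hR]
      rw [wdiff]
      field_simp
      ring
    rw [this]; ring
  rw [main]
  refine (abs_sub _ _).trans (add_le_add ?_ ?_)
  · -- T term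
    have TS : Integrable (fun ω => (T ω - σ^2)^2) P := by
      refine bint _ ((Tm.sub_const _).pow_const 2) ((n * ((1/2) * (B * B)) + σ^2)^2) fun ω => ?_
      rw [abs_pow]
      refine pow_le_pow_left₀ (abs_nonneg _) ((abs_sub _ _).trans ?_) 2
      rw [abs_of_pos (pow_pos hσ 2)]
      gcongr; exact Tb ω
    have TA : Integrable (fun ω => |T ω - σ^2|) P := by
      refine bint _ ((Tm.sub_const _).abs) ((n * ((1/2) * (B * B)) + σ^2)) fun ω => ?_
      rw [abs_abs]
      refine ((abs_sub _ _).trans ?_)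
      rw [abs_of_pos (pow_pos hσ 2)]
      gcongr; exact Tb ω
    have cs : ∫ ω, |T ω - σ^2| ∂P ≤ Real.sqrt (A * n) := by
      have v := variance_nonneg (fun ω => |T ω - σ^2|) P
      rw [variance_eq_sub (by
        refine MemLp.of_bound (Tm.sub_const _).abs.aestronglyMeasurable
          ((n * ((1/2) * (B * B)) + σ^2)) (Eventually.of_forall fun ω => ?_)
        rw [Real.norm_eq_abs, abs_abs]
        refine ((abs_sub _ _).trans ?_)
        rw [abs_of_pos (pow_pos hσ 2)]
        gcongr; exact Tb ω)] at v
      have e : ∫ ω, ((fun ω => |T ω - σ^2|)^2) ω ∂P = ∫ ω, (T ω - σ^2)^2 ∂P := by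
        congr 1; ext ω; simp
      rw [e] at v
      apply Real.le_sqrt_of_sq_le
      linarith
    calc |∫ ω, (1 - T ω / σ^2) * f' (W ω) ∂P| ≤ ∫ ω, |(1 - T ω / σ^2) * f' (W ω)| ∂P :=
          abs_integral_le_integral_abs
      _ ≤ ∫ ω, (2 / σ^2) * |T ω - σ^2| ∂P := by
          refine integral_mono Tf.abs (TA.const_mul _) fun ω => ?_
          show |(1 - T ω / σ^2) * f' (W ω)| ≤ (2 / σ^2) * |T ω - σ^2|
          have : 1 - T ω / σ^2 = -(T ω - σ^2)/σ^2 := by field_simp; ring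
          rw [this, abs_mul, abs_div, abs_neg, abs_of_pos (pow_pos hσ 2)]
          have := mul_le_mul_of_nonneg_left (hf' (W ω)) (show 0 ≤ |T ω - σ^2| / σ^2 by positivity)
          refine this.trans (le_of_eq (by ring))
      _ = (2 / σ^2) * ∫ ω, |T ω - σ^2| ∂P := integral_const_mul _ _
      _ ≤ (2 / σ^2) * Real.sqrt (A * n) := by gcongr
      _ = _ := by ring
  · calc |∫ ω, ∑ j, (1/2) * (D j ω / σ * R j ω) ∂P| ≤ ∫ ω, |∑ j, (1/2) * (D j ω / σ * R j ω)| ∂P :=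
          abs_integral_le_integral_abs
      _ ≤ ∫ ω, (n * (1/2) * δ) * (δ * (δ * (6 + 2 * |W ω|) + (δ / α) * I (W ω))) ∂P := by
          refine integral_mono (integrable_finsetSum _ fun j _ => (DRint j).const_mul _).abs
            (bndInt.const_mul _) fun ω => ?_
          refine (Finset.abs_sum_le_sum_abs _ _).trans ?_
          calc _ ≤ ∑ j : Fin n, (1/2) * (δ * (δ * (δ * (6 + 2 * |W ω|) + (δ / α) * I (W ω)))) := by
                refine Finset.sum_le_sum fun j _ => ?_
                rw [abs_mul, abs_mul, abs_of_pos (by norm_num : (0:ℝ) < 1/2), abs_div, abs_of_pos hσ]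
                refine mul_le_mul_of_nonneg_left ?_ (by norm_num)
                exact mul_le_mul (div_le_div_of_nonneg_right (hDB j ω) hσ.le) (Rb j ω)
                  (abs_nonneg _) δ0.le
            _ = _ := by simp; ring
      _ = (n * (1/2) * δ) * (δ * (δ * (6 + 2 * ∫ ω, |W ω| ∂P) + (δ / α) * ∫ ω, I (W ω) ∂P)) := by
          have i6 : Integrable (fun ω => 6 + 2 * |W ω|) P :=
            (integrable_const (6:ℝ)).add (Wint.abs.const_mul 2)
          rw [integral_const_mul, integral_const_mul,
            integral_add (i6.const_mul δ)
              (IWint.const_mul (δ/α)), integral_const_mul, integral_const_mul,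
            integral_add (integrable_const (6:ℝ)) (Wint.abs.const_mul 2), integral_const_mul]
          simp
      _ ≤ (n * (1/2) * δ) * (δ * (δ * (6 + 2 * 1) + (δ / α) * ∫ ω, I (W ω) ∂P)) := by gcongr
      _ = _ := by rw [EI]; ring

theorem BE {Ω : Type*} [MeasurableSpace Ω] (P : Measure Ω) [IsProbabilityMeasure P]
    (n : ℕ) (hn : 1 ≤ n) (S : Ω → ℝ) (hS : Measurable S) (m σ B A M : ℝ)
    (D Sj : Fin n → Ω → ℝ) (hD : ∀ j, Measurable (D j)) (hSj : ∀ j, Measurable (Sj j))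
    (hB : 0 < B) (hDB : ∀ j ω, |D j ω| ≤ B) (hSB : ∀ j ω, |S ω - Sj j ω| ≤ B) (hσ : 0 < σ)
    (hM : ∀ ω, |S ω - m| ≤ M) (hvar : ∫ ω, (S ω - m) ^ 2 ∂P = σ ^ 2)
    (hid : ∀ F : ℝ → ℝ, Measurable F → ∀ C, (∀ x, |F x| ≤ C) →
      ∫ ω, (S ω - m) * F (S ω) ∂P = ∑ j, (1/2) * ∫ ω, D j ω * (F (S ω) - F (Sj j ω)) ∂P)
    (hT : ∫ ω, ((∑ j, (1/2) * (D j ω * (S ω - Sj j ω))) - σ ^ 2) ^ 2 ∂P ≤ A * n) (t : ℝ) :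
    |P.real {ω | (S ω - m) / σ ≤ t} - stdGaussCDF t| ≤
      2 * (2 * Real.sqrt (A * n) / σ ^ 2 + 13 / 2 * (n * (B / σ) ^ 3) + B / σ) := by
  have nz : (0:ℝ) < n := by exact_mod_cast hn
  set δ := B / σ with hδ
  have δ0 : 0 < δ := div_pos hB hσ
  set W : Ω → ℝ := fun ω => (S ω - m) / σ with hW
  have Wm : Measurable W := (hS.sub_const m).div_const σ
  set α := 2 * (n * δ ^ 3) with hα'
  have hα : 0 < α := by positivity
  set E0 := 2 * Real.sqrt (A * n) / σ ^ 2 + 13 / 2 * (n * δ ^ 3) + δ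
  have G01 : ∀ t, 0 ≤ stdGaussCDF t ∧ stdGaussCDF t ≤ 1 := fun t =>
    ⟨ENNReal.toReal_nonneg, by
      unfold stdGaussCDF
      exact measureReal_le_one (μ := gaussianReal 0 1)⟩
  refine halving (fun t => |P.real {ω | W ω ≤ t} - stdGaussCDF t|) E0 (fun t => ?_) (fun Dd hDd t => ?_) t
  · have := G01 t
    have h2 : P.real {ω | W ω ≤ t} ≤ 1 := measureReal_le_one
    have h3 : 0 ≤ P.real {ω | W ω ≤ t} := measureReal_nonneg
    rw [abs_le]; constructor <;> linarith
  · have win : ∀ a b, a ≤ b → P.real {ω | W ω ∈ Ioc a b} ≤ 2 * Dd + (b - a) := by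
      intro a b hab
      have e : {ω | W ω ∈ Ioc a b} = {ω | W ω ≤ b} \ {ω | W ω ≤ a} := by
        ext ω; simp; tauto
      have ms : MeasurableSet {ω | W ω ≤ a} := measurableSet_le Wm measurable_const
      have sub : {ω | W ω ≤ a} ⊆ {ω | W ω ≤ b} := fun ω h => le_trans h hab
      rw [e, measureReal_sdiff sub ms]
      have h1 := abs_le.1 (hDd a)
      have h2 := abs_le.1 (hDd b)
      have := gcdf_lip hab
      linarith [h1.1, h2.2]
    have sm : ∀ z, |∫ ω, ramp z α (W ω) ∂P - ∫ x, ramp z α x ∂(gaussianReal 0 1)| ≤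
        Dd / 2 + E0 - α := by
      intro z
      refine (BE_smooth P n S hS m σ B A M D Sj hD hSj hB hDB hSB hσ hM hvar hid hT z α hα).trans ?_
      have w := win (z - 2 * δ) (z + α + δ) (by linarith)
      have : n * (1/2) * δ^3 * (8 + (1/α) * P.real {ω | W ω ∈ Ioc (z - 2 * δ) (z + α + δ)}) =
          4 * (n * δ^3) + 1/4 * P.real {ω | W ω ∈ Ioc (z - 2 * δ) (z + α + δ)} := by
        rw [hα']; field_simp; ring
      change 2 * Real.sqrt (A * n) / σ ^ 2 + n * (1/2) * δ^3 *
        (8 + (1/α) * P.real {ω | W ω ∈ Ioc (z - 2 * δ) (z + α + δ)}) ≤ _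
      rw [this]
      show _ ≤ Dd / 2 + (2 * Real.sqrt (A * n) / σ ^ 2 + 13 / 2 * (n * δ ^ 3) + δ) - α
      linarith
    have ind : ∀ (Q : Measure ℝ) [IsProbabilityMeasure Q] (z : ℝ),
        Q.real (Iic z) ≤ ∫ x, ramp z α x ∂Q ∧ ∫ x, ramp z α x ∂Q ≤ Q.real (Iic (z + α)) := by
      intro Q _ z
      have ri : Integrable (ramp z α) Q := Integrable.of_bound
        (ramp_cont z α).aestronglyMeasurable 1 (Eventually.of_forall fun x => by
          rw [Real.norm_eq_abs, abs_of_nonneg (ramp_nonneg _ _ _)]; exact ramp_le_one _ _ _)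
      rw [← integral_indicator_one measurableSet_Iic, ← integral_indicator_one measurableSet_Iic]
      constructor
      · refine integral_mono ((integrable_const (1:ℝ)).indicator measurableSet_Iic) ri fun x => ?_
        by_cases h : x ≤ z
        · rw [indicator_of_mem (by exact h), ramp_one _ _ _ hα h]; simp
        · rw [indicator_of_notMem (by exact h)]; exact ramp_nonneg _ _ _
      · refine integral_mono ri ((integrable_const (1:ℝ)).indicator measurableSet_Iic) fun x => ?_
        by_cases h : x ≤ z + α
        · rw [indicator_of_mem (by exact h)]; exact ramp_le_one _ _ _
        · rw [indicator_of_notMem (by exact h), ramp_zero _ _ _ hα (not_le.1 h).le]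
    have : IsProbabilityMeasure (P.map W) := Measure.isProbabilityMeasure_map Wm.aemeasurable
    have tr : ∀ z, ∫ x, ramp z α x ∂(P.map W) = ∫ ω, ramp z α (W ω) ∂P := fun z =>
      integral_map Wm.aemeasurable (ramp_cont z α).aestronglyMeasurable
    have trp : ∀ z, (P.map W).real (Iic z) = P.real {ω | W ω ≤ z} := fun z => by
      rw [map_measureReal_apply Wm measurableSet_Iic]; rfl
    have gp : ∀ z, (gaussianReal 0 1).real (Iic z) = stdGaussCDF z := fun z => rfl
    have a1 := (ind (P.map W) t).1
    have a2 := (ind (P.map W) (t - α)).2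
    have b1 := (ind (gaussianReal 0 1) t).2
    have b2 := (ind (gaussianReal 0 1) (t - α)).1
    rw [tr, trp] at a1 a2
    rw [gp] at b1 b2
    rw [sub_add_cancel] at a2
    have c1 := abs_le.1 (sm t)
    have c2 := abs_le.1 (sm (t - α))
    have d1 := gcdf_lip (a := t) (b := t + α) (by linarith)
    have d2 := gcdf_lip (a := t - α) (b := t) (by linarith)
    rw [abs_le]
    constructor
    · linarith [c2.1]
    · linarith [c1.2]

section Prods
variable {E : Type*} [MeasurableSpace E] {n : ℕ}

def sel (s : Set (Fin n)) (z : Fin n → E × E) : Fin n → E :=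
  fun i => if i ∈ s then (z i).2 else (z i).1

def swp (s : Set (Fin n)) (z : Fin n → E × E) : Fin n → E × E :=
  fun i => if i ∈ s then (z i).swap else z i

def Lt (n k : ℕ) : Set (Fin n) := {i | i.val < k}

lemma sel_swp (s t : Set (Fin n)) (z : Fin n → E × E) :
    sel t (swp s z) = sel (symmDiff t s) z := by
  ext i
  simp only [sel, swp, Set.mem_symmDiff]
  by_cases h1 : i ∈ s <;> by_cases h2 : i ∈ t <;> simp [h1, h2]

lemma Lt_symm (k : Fin n) : symmDiff (Lt n k) {k} = Lt n (k + 1) := by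
  ext i
  simp only [Lt, Set.mem_symmDiff, mem_setOf_eq, mem_singleton_iff]
  rw [Fin.ext_iff]
  omega

lemma Lt_symm' (k : Fin n) : symmDiff (Lt n (k + 1)) {k} = Lt n k := by
  rw [← Lt_symm, symmDiff_symmDiff_cancel_right]

variable (ν : Measure E) [IsProbabilityMeasure ν]

abbrev pw (n : ℕ) (ν : Measure E) : Measure (Fin n → E) := Measure.pi fun _ => ν

lemma sel_mp (s : Set (Fin n)) : MeasurePreserving (sel (E := E) s) (pw n (ν.prod ν)) (pw n ν) := by
  have := measurePreserving_pi (fun _ : Fin n => ν.prod ν) (fun _ => ν)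
    (f := fun i (e : E × E) => if i ∈ s then e.2 else e.1) (fun i => by
      by_cases h : i ∈ s
      · simp only [h, if_true]; exact measurePreserving_snd
      · simp only [h, if_false]; exact measurePreserving_fst)
  exact this

lemma swp_mp (s : Set (Fin n)) :
    MeasurePreserving (swp (E := E) s) (pw n (ν.prod ν)) (pw n (ν.prod ν)) := by
  have := measurePreserving_pi (fun _ : Fin n => ν.prod ν) (fun _ => ν.prod ν)
    (f := fun i (e : E × E) => if i ∈ s then e.swap else e) (fun i => by
      by_cases h : i ∈ s
      · simp only [h, if_true]; exact Measure.measurePreserving_swap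
      · simp only [h, if_false]; exact MeasurePreserving.id _)
  exact this

lemma mp_integral {α β : Type*} [MeasurableSpace α] [MeasurableSpace β] {μ : Measure α}
    {μ' : Measure β} {T : α → β} (h : MeasurePreserving T μ μ') (g : β → ℝ) (hg : Measurable g) :
    ∫ a, g (T a) ∂μ = ∫ b, g b ∂μ' := by
  rw [← h.map_eq, integral_map h.measurable.aemeasurable hg.aestronglyMeasurable]

lemma bdd_int {Ω : Type*} [MeasurableSpace Ω] (P : Measure Ω) [IsProbabilityMeasure P]
    (g : Ω → ℝ) (hg : Measurable g) (C : ℝ) (h : ∀ ω, |g ω| ≤ C) : Integrable g P :=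
  Integrable.of_bound hg.aestronglyMeasurable C (Eventually.of_forall h)

lemma indep_sel (g F : (Fin n → E) → ℝ) (hg : Measurable g) (hF : Measurable F) :
    ∫ z, g (sel univ z) * F (sel ∅ z) ∂(pw n (ν.prod ν)) = (∫ x, g x ∂(pw n ν)) * ∫ x, F x ∂(pw n ν) := by
  have := measurePreserving_arrowProdEquivProdArrow E E (Fin n) (fun _ => ν) (fun _ => ν)
  have h2 := mp_integral this (fun p => g p.2 * F p.1) ((hg.comp measurable_snd).mul (hF.comp measurable_fst))
  have h3 := integral_prod_mul (μ := pw n ν) (ν := pw n ν) F g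
  rw [mul_comm, ← h3]
  simp only [mul_comm (F _)]
  rw [← h2]
  congr 1; ext z
  congr 2
  · ext i; simp [sel, MeasurableEquiv.arrowProdEquivProdArrow, Equiv.arrowProdEquivProdArrow]
  · ext i; simp [sel, MeasurableEquiv.arrowProdEquivProdArrow, Equiv.arrowProdEquivProdArrow]

theorem prod_identity (g F : (Fin n → E) → ℝ) (hg : Measurable g) (hF : Measurable F)
    (C1 C2 : ℝ) (h1 : ∀ x, |g x| ≤ C1) (h2 : ∀ x, |F x| ≤ C2) :
    ∫ z, (g (sel ∅ z) - ∫ x, g x ∂(pw n ν)) * F (sel ∅ z) ∂(pw n (ν.prod ν)) =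
      ∑ j : Fin n, (1/2) * ∫ z, (g (sel (Lt n j) z) - g (sel (Lt n (j+1)) z)) *
        (F (sel ∅ z) - F (sel {j} z)) ∂(pw n (ν.prod ν)) := by
  set P := pw n (ν.prod ν) with hP
  have gm : ∀ s, Measurable fun z => g (sel s z) := fun s => hg.comp (sel_mp ν s).measurable
  have Fm : ∀ s, Measurable fun z => F (sel s z) := fun s => hF.comp (sel_mp ν s).measurable
  have int : ∀ s t, Integrable (fun z => g (sel s z) * F (sel t z)) P := fun s t =>
    bdd_int P _ ((gm s).mul (Fm t)) (C1 * C2) fun z => by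
      rw [abs_mul]; exact mul_le_mul (h1 _) (h2 _) (abs_nonneg _) ((abs_nonneg _).trans (h1 (sel s z)))
  have int2 : ∀ s t s' t', Integrable (fun z => g (sel s z) * F (sel t z) - g (sel s' z) * F (sel t' z)) P :=
    fun s t s' t' => (int s t).sub (int s' t')
  have sw : ∀ s t u, ∫ z, g (sel s z) * F (sel t z) ∂P =
      ∫ z, g (sel (symmDiff s u) z) * F (sel (symmDiff t u) z) ∂P := fun s t u => by
    rw [← mp_integral (swp_mp ν u) (fun z => g (sel s z) * F (sel t z)) ((gm s).mul (Fm t))]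
    simp only [sel_swp]
    rfl
  have each : ∀ j : Fin n, (1/2) * ∫ z, (g (sel (Lt n j) z) - g (sel (Lt n (j+1)) z)) *
        (F (sel ∅ z) - F (sel {j} z)) ∂P = ∫ z, g (sel (Lt n j) z) * F (sel ∅ z) ∂P -
        ∫ z, g (sel (Lt n (j+1)) z) * F (sel ∅ z) ∂P := by
    intro j
    have e : ∫ z, (g (sel (Lt n j) z) - g (sel (Lt n (j+1)) z)) *
        (F (sel ∅ z) - F (sel {j} z)) ∂P =
        (∫ z, g (sel (Lt n j) z) * F (sel ∅ z) ∂P - ∫ z, g (sel (Lt n (j+1)) z) * F (sel ∅ z) ∂P)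
        - (∫ z, g (sel (Lt n j) z) * F (sel {j} z) ∂P - ∫ z, g (sel (Lt n (j+1)) z) * F (sel {j} z) ∂P) := by
      rw [← integral_sub (int _ _) (int _ _), ← integral_sub (int _ _) (int _ _),
        ← integral_sub (int2 _ _ _ _) (int2 _ _ _ _)]
      congr 1; ext z; ring
    rw [e, sw (Lt n j) {j} {j}, sw (Lt n (j+1)) {j} {j}, Lt_symm, Lt_symm', symmDiff_self]
    simp only [Set.bot_eq_empty]
    ring
  rw [Finset.sum_congr rfl fun j _ => each j]
  rw [Fin.sum_univ_eq_sum_range (fun j => ∫ z, g (sel (Lt n j) z) * F (sel ∅ z) ∂P -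
        ∫ z, g (sel (Lt n (j+1)) z) * F (sel ∅ z) ∂P) n, Finset.sum_range_sub']
  have L0 : Lt n 0 = ∅ := by ext i; simp [Lt]
  have Ln : Lt n n = univ := by ext i; simp [Lt]
  rw [L0, Ln, indep_sel ν g F hg hF]
  rw [← mp_integral (sel_mp ν ∅) F hF, ← integral_const_mul, ← integral_sub (int _ _)]
  · congr 1; ext z; ring
  · exact (bdd_int P _ (Fm ∅) C2 fun z => h2 _).const_mul _

theorem efron_stein (g : (Fin n → E) → ℝ) (hg : Measurable g) (C1 : ℝ) (h1 : ∀ x, |g x| ≤ C1) :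
    ∫ x, (g x - ∫ y, g y ∂(pw n ν)) ^ 2 ∂(pw n ν) ≤
      ∑ j : Fin n, (1/2) * ∫ z, (g (sel ∅ z) - g (sel {j} z)) ^ 2 ∂(pw n (ν.prod ν)) := by
  set P := pw n (ν.prod ν) with hP
  set m := ∫ y, g y ∂(pw n ν)
  have gm : ∀ s, Measurable fun z => g (sel s z) := fun s => hg.comp (sel_mp ν s).measurable
  have hsq : ∫ x, (g x - m) ^ 2 ∂(pw n ν) = ∫ z, (g (sel ∅ z) - m) * g (sel ∅ z) ∂P := by
    have i1 : Integrable g (pw n ν) := bdd_int _ g hg C1 h1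
    have i2 : Integrable (fun x => (g x - m) * g x) (pw n ν) :=
      bdd_int _ _ ((hg.sub_const m).mul hg) ((C1 + |m|) * C1) fun x => by
        rw [abs_mul]
        exact mul_le_mul ((abs_sub _ _).trans (by linarith [h1 x])) (h1 x) (abs_nonneg _)
          (by have := abs_nonneg m; have := (abs_nonneg _).trans (h1 x); linarith)
    rw [mp_integral (sel_mp ν ∅) (fun x => (g x - m) * g x) ((hg.sub_const m).mul hg)]
    have : ∀ x, (g x - m)^2 = (g x - m) * g x - m * (g x - m) := fun x => by ring
    simp only [this]
    have i3 : Integrable (fun x => g x - m) (pw n ν) := i1.sub (integrable_const m)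
    rw [integral_sub i2 (i3.const_mul m), integral_const_mul,
      integral_sub i1 (integrable_const m)]
    simp [m]
  rw [hsq, prod_identity ν g g hg hg C1 C1 h1 h1]
  refine Finset.sum_le_sum fun j _ => mul_le_mul_of_nonneg_left ?_ (by norm_num)
  have sb : ∀ s t, Integrable (fun z => (g (sel s z) - g (sel t z))^2) P := fun s t =>
    bdd_int P _ (((gm s).sub (gm t)).pow_const 2) ((C1 + C1)^2) fun z => by
      rw [abs_pow]
      exact pow_le_pow_left₀ (abs_nonneg _) ((abs_sub _ _).trans (add_le_add (h1 _) (h1 _))) 2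
  have eqj : ∫ z, (g (sel (Lt n j) z) - g (sel (Lt n (j+1)) z))^2 ∂P =
      ∫ z, (g (sel ∅ z) - g (sel {j} z)) ^ 2 ∂P := by
    rw [← mp_integral (swp_mp ν (Lt n j)) (fun z => (g (sel (Lt n j) z) - g (sel (Lt n (j+1)) z))^2)
      (((gm _).sub (gm _)).pow_const 2)]
    simp only [sel_swp, symmDiff_self]
    rw [← Lt_symm, symmDiff_comm, symmDiff_symmDiff_cancel_left]
    rfl
  have key : ∫ z, (g (sel (Lt n j) z) - g (sel (Lt n (j+1)) z)) * (g (sel ∅ z) - g (sel {j} z)) ∂P ≤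
      ∫ z, ((1/2) * (g (sel (Lt n j) z) - g (sel (Lt n (j+1)) z))^2 +
        (1/2) * (g (sel ∅ z) - g (sel {j} z)) ^ 2) ∂P := by
    refine integral_mono ?_ (((sb _ _).const_mul _).add ((sb _ _).const_mul _)) fun z => ?_
    · exact bdd_int P _ (((gm _).sub (gm _)).mul ((gm _).sub (gm _))) ((C1 + C1) * (C1 + C1)) fun z => by
        rw [abs_mul]
        exact mul_le_mul ((abs_sub _ _).trans (add_le_add (h1 _) (h1 _)))
          ((abs_sub _ _).trans (add_le_add (h1 _) (h1 _))) (abs_nonneg _)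
          (by have := (abs_nonneg _).trans (h1 (sel ∅ z)); linarith)
    · simp only
      nlinarith [sq_nonneg ((g (sel (Lt n j) z) - g (sel (Lt n (j+1)) z)) - (g (sel ∅ z) - g (sel {j} z)))]
  rw [integral_add ((sb _ _).const_mul _) ((sb _ _).const_mul _), integral_const_mul,
    integral_const_mul, eqj] at key
  linarith

/-- resampling one coordinate -/
lemma upd_mp (k : Fin n) : MeasurePreserving (fun p : (Fin n → E) × E => Function.update p.1 k p.2)
    ((pw n ν).prod ν) (pw n ν) := by
  have hm : Measurable (fun p : (Fin n → E) × E => Function.update p.1 k p.2) :=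
    measurable_pi_lambda _ fun i => by
      by_cases h : i = k
      · subst h; simpa using measurable_snd
      · simp only [Function.update_of_ne h]
        exact (measurable_pi_apply i).comp measurable_fst
  refine ⟨hm, ?_⟩
  symm
  refine Measure.pi_eq fun s hs => ?_
  rw [Measure.map_apply hm (MeasurableSet.univ_pi hs)]
  have : (fun p : (Fin n → E) × E => Function.update p.1 k p.2) ⁻¹' (univ.pi s) =
      (univ.pi (Function.update s k univ)) ×ˢ (s k) := by
    ext ⟨x, e⟩
    simp only [mem_preimage, mem_univ_pi, mem_prod]
    constructor
    · intro h
      refine ⟨fun i => ?_, by simpa using h k⟩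
      by_cases hi : i = k
      · subst hi; simp
      · have := h i
        rwa [Function.update_of_ne hi] at this ⊢
    · rintro ⟨h, h'⟩ i
      by_cases hi : i = k
      · subst hi; simpa using h'
      · have := h i
        rwa [Function.update_of_ne hi] at this ⊢
  rw [this, Measure.prod_prod, Measure.pi_pi]
  rw [← Finset.mul_prod_erase Finset.univ _ (Finset.mem_univ k),
    ← Finset.mul_prod_erase Finset.univ (fun i => ν (s i)) (Finset.mem_univ k)]
  simp only [Function.update_self, measure_univ, one_mul]
  rw [mul_comm]
  congr 1
  refine Finset.prod_congr rfl fun i hi => ?_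
  rw [Function.update_of_ne (Finset.ne_of_mem_erase hi)]

end Prods

section Iso
variable {G : Type*} [MeasurableSpace G] {n : ℕ}

def Iso (R : G → G → Prop) (k : Fin n) (X : Fin n → G) : Prop := ∀ l, l ≠ k → ¬ R (X l) (X k)

def isoI (R : G → G → Prop) (k : Fin n) (X : Fin n → G) : ℝ := if Iso R k X then 1 else 0

def isoS (R : G → G → Prop) (X : Fin n → G) : ℝ := ∑ k : Fin n, isoI R k X

lemma meas_isoI {R : G → G → Prop} (hR : MeasurableSet {p : G × G | R p.1 p.2}) (k : Fin n) :
    Measurable (isoI (n := n) R k) := by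
  have : MeasurableSet {X : Fin n → G | Iso R k X} := by
    have e : {X : Fin n → G | Iso R k X} =
        ⋂ l : Fin n, {X | l ≠ k → ¬ R (X l) (X k)} := by
      ext X; simp [Iso]
    rw [e]
    refine MeasurableSet.iInter fun l => ?_
    by_cases h : l = k
    · simp [h]
    · simp only [ne_eq, h, not_false_eq_true, forall_const]
      have hm : Measurable (fun X : Fin n → G => (X l, X k)) :=
        (measurable_pi_apply l).prodMk (measurable_pi_apply k)
      exact (hm hR).compl
  exact Measurable.ite this measurable_const measurable_const

lemma meas_isoS {R : G → G → Prop} (hR : MeasurableSet {p : G × G | R p.1 p.2}) :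
    Measurable (isoS (n := n) R) :=
  Finset.measurable_sum _ fun k _ => meas_isoI hR k

lemma isoI_nonneg (R : G → G → Prop) (k : Fin n) (X) : 0 ≤ isoI R k X := by
  unfold isoI; split_ifs <;> norm_num
lemma isoI_le (R : G → G → Prop) (k : Fin n) (X) : isoI R k X ≤ 1 := by
  unfold isoI; split_ifs <;> norm_num

lemma isoS_abs (R : G → G → Prop) (X : Fin n → G) : |isoS R X| ≤ n := by
  unfold isoS
  rw [abs_of_nonneg (Finset.sum_nonneg fun k _ => isoI_nonneg R k X)]
  refine (Finset.sum_le_sum fun k _ => isoI_le R k X).trans ?_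
  simp

lemma iso_irr {R : G → G → Prop} {k i : Fin n} (hik : k ≠ i) (X : Fin n → G) (y : G)
    (h1 : ¬ R (X i) (X k)) (h2 : ¬ R y (X k)) :
    isoI R k (Function.update X i y) = isoI R k X := by
  have : Iso R k (Function.update X i y) ↔ Iso R k X := by
    unfold Iso
    rw [Function.update_of_ne hik]
    refine forall_congr' fun l => ?_
    by_cases hl : l = i
    · subst hl; simp [h1, h2]
    · rw [Function.update_of_ne hl]
  unfold isoI
  simp only [this]

/-- packing property -/
def Pack (R : G → G → Prop) (κ : ℕ) : Prop :=
  ∀ (n : ℕ) (X : Fin n → G) (x : G) (s : Finset (Fin n)), (∀ k ∈ s, R x (X k)) →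
    (∀ k ∈ s, ∀ l ∈ s, l ≠ k → ¬ R (X l) (X k)) → s.card ≤ κ

lemma iso_diff1 {R : G → G → Prop} {κ : ℕ} (hp : Pack R κ) (X : Fin n → G) (i : Fin n) (y : G) :
    isoS R X - isoS R (Function.update X i y) ≤ 1 + κ := by
  unfold isoS
  rw [← Finset.sum_sub_distrib]
  let s : Finset (Fin n) := Finset.univ.filter fun k => k ≠ i ∧ Iso R k X ∧ R y (X k)
  have hs : s.card ≤ κ := by
    refine hp n X y s (fun k hk => ?_) fun k hk l hl hlk => ?_
    · exact (Finset.mem_filter.1 hk).2.2.2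
    · exact (Finset.mem_filter.1 hk).2.2.1 l hlk
  have h : ∀ k, isoI R k X - isoI R k (Function.update X i y) ≤
      (if k = i then 1 else 0) + (if k ∈ s then (1:ℝ) else 0) := by
    intro k
    have a1 := isoI_nonneg R k X
    have a2 := isoI_le R k X
    have a3 := isoI_nonneg R k (Function.update X i y)
    by_cases hk : k = i
    · rw [if_pos hk]; split_ifs <;> linarith
    · rw [if_neg hk]
      by_cases hks : k ∈ s
      · rw [if_pos hks]; linarith
      · rw [if_neg hks]
        by_cases hI : Iso R k X
        · have : ¬ R y (X k) := fun h => hks (Finset.mem_filter.2 ⟨Finset.mem_univ _, hk, hI, h⟩)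
          rw [iso_irr hk X y (hI i (Ne.symm hk)) this]; simp
        · have : isoI R k X = 0 := by unfold isoI; rw [if_neg hI]
          linarith
  refine (Finset.sum_le_sum fun k _ => h k).trans ?_
  rw [Finset.sum_add_distrib]
  have : ((s.card : ℕ) : ℝ) ≤ κ := by exact_mod_cast hs
  simpa using this

lemma iso_diff {R : G → G → Prop} {κ : ℕ} (hp : Pack R κ) (X : Fin n → G) (i : Fin n) (y : G) :
    |isoS R X - isoS R (Function.update X i y)| ≤ 1 + κ := by
  rw [abs_le]
  refine ⟨?_, iso_diff1 hp X i y⟩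
  have := iso_diff1 hp (Function.update X i y) i (X i)
  rw [Function.update_idem, Function.update_eq_self] at this
  linarith

lemma iso_local {R R2 : G → G → Prop} (hs : ∀ a b, R a b → R b a) (hr : ∀ a, R a a)
    (h2 : ∀ a b c, R a b → R b c → R2 a c) {i j : Fin n} (hij : i ≠ j) (X : Fin n → G) (y u : G)
    (h11 : ¬ R2 (X i) (X j)) (h12 : ¬ R2 (X i) u) (h21 : ¬ R2 y (X j)) (h22 : ¬ R2 y u) :
    isoS R (Function.update X i y) - isoS R (Function.update (Function.update X i y) j u) =
    isoS R X - isoS R (Function.update X j u) := by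
  have hR : ∀ a b, ¬ R2 a b → ¬ R a b := fun a b h h' => h (h2 a a b (hr a) h')
  unfold isoS
  rw [← Finset.sum_sub_distrib, ← Finset.sum_sub_distrib]
  refine Finset.sum_congr rfl fun k _ => ?_
  have A : ∀ hk : k ≠ j, ¬ R (X j) (Function.update X i y k) → ¬ R u (Function.update X i y k) →
      ¬ R (X j) (X k) → ¬ R u (X k) → isoI R k (Function.update X i y) -
      isoI R k (Function.update (Function.update X i y) j u) = isoI R k X - isoI R k (Function.update X j u) := by
    intro hk a b c d
    rw [iso_irr hk X u c d, iso_irr hk _ u (by rwa [Function.update_of_ne hij.symm]) b]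
    simp
  have B : ∀ hk : k ≠ i, ¬ R (X i) (Function.update X j u k) → ¬ R y (Function.update X j u k) →
      ¬ R (X i) (X k) → ¬ R y (X k) → isoI R k (Function.update X i y) -
      isoI R k (Function.update (Function.update X i y) j u) = isoI R k X - isoI R k (Function.update X j u) := by
    intro hk a b c d
    rw [iso_irr hk X y c d, Function.update_comm hij, iso_irr hk _ y (by rwa [Function.update_of_ne hij]) b]
  by_cases hkj : k = j
  · subst hkj
    refine B hij.symm ?_ ?_ (hR _ _ h11) (hR _ _ h21) <;> rw [Function.update_self]
    exacts [hR _ _ h12, hR _ _ h22]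
  by_cases hki : k = i
  · subst hki
    have sy : ∀ a b, ¬ R2 a b → ¬ R b a := fun a b h h' => hR a b h (hs _ _ h')
    refine A hij ?_ ?_ (sy _ _ h11) (sy _ _ h12) <;> rw [Function.update_self]
    exacts [sy _ _ h21, sy _ _ h22]
  by_cases c : R (X j) (X k) ∨ R u (X k)
  · refine B hki ?_ ?_ ?_ ?_ <;> try rw [Function.update_of_ne hkj]
    all_goals
      intro h
      rcases c with c | c
    exacts [h11 (h2 _ _ _ h (hs _ _ c)), h12 (h2 _ _ _ h (hs _ _ c)), h21 (h2 _ _ _ h (hs _ _ c)),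
      h22 (h2 _ _ _ h (hs _ _ c)), h11 (h2 _ _ _ h (hs _ _ c)), h12 (h2 _ _ _ h (hs _ _ c)),
      h21 (h2 _ _ _ h (hs _ _ c)), h22 (h2 _ _ _ h (hs _ _ c))]
  · push Not at c
    refine A hkj ?_ ?_ c.1 c.2 <;> rw [Function.update_of_ne hki]
    exacts [c.1, c.2]

lemma sel_insert (s t : Set (Fin n)) (j : Fin n) (hj : j ∈ t) (h : ∀ i, i ≠ j → (i ∈ t ↔ i ∈ s))
    (Z : Fin n → G × G) : sel t Z = Function.update (sel s Z) j (Z j).2 := by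
  ext i
  by_cases hi : i = j
  · subst hi; simp [sel, hj]
  · rw [Function.update_of_ne hi]; simp [sel, h i hi]

lemma sel_update (s : Set (Fin n)) (i : Fin n) (e : G × G)
    (Z : Fin n → G × G) : sel s (Function.update Z i e) =
      Function.update (sel s Z) i (if i ∈ s then e.2 else e.1) := by
  ext k
  by_cases hi : k = i
  · subst hi; simp [sel]
  · rw [Function.update_of_ne hi]; simp [sel, Function.update_of_ne hi]

def near (R2 : G → G → Prop) (e e' : G × G) : Prop :=
  R2 e.1 e'.1 ∨ R2 e.1 e'.2 ∨ R2 e.2 e'.1 ∨ R2 e.2 e'.2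

lemma sel_local {R R2 : G → G → Prop} (hs : ∀ a b, R a b → R b a) (hr : ∀ a, R a a)
    (h2 : ∀ a b c, R a b → R b c → R2 a c) (s t : Set (Fin n)) (i j : Fin n) (hij : i ≠ j)
    (hjs : j ∉ s) (hj : j ∈ t) (h : ∀ i, i ≠ j → (i ∈ t ↔ i ∈ s)) (Z : Fin n → G × G) (e : G × G)
    (n1 : ¬ near R2 (Z i) (Z j)) (n2 : ¬ near R2 e (Z j)) :
    isoS R (sel s (Function.update Z i e)) - isoS R (sel t (Function.update Z i e)) =
    isoS R (sel s Z) - isoS R (sel t Z) := by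
  unfold near at n1 n2
  push Not at n1 n2
  rw [sel_insert s t j hj h, sel_insert s t j hj h, sel_update, Function.update_of_ne hij.symm]
  have e1 : sel s Z j = (Z j).1 := by simp [sel, hjs]
  have e2 : sel s Z i = (Z i).2 ∨ sel s Z i = (Z i).1 := by
    by_cases h : i ∈ s <;> simp [sel, h]
  have e3 : (if i ∈ s then e.2 else e.1) = e.2 ∨ (if i ∈ s then e.2 else e.1) = e.1 := by
    by_cases h : i ∈ s <;> simp [h]
  apply iso_local hs hr h2 hij
  · rw [e1]; rcases e2 with e2 | e2 <;> rw [e2]; exacts [n1.2.2.1, n1.1]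
  · rcases e2 with e2 | e2 <;> rw [e2]; exacts [n1.2.2.2, n1.2.1]
  · rw [e1]; rcases e3 with e2 | e2 <;> rw [e2]; exacts [n2.2.2.1, n2.1]
  · rcases e3 with e2 | e2 <;> rw [e2]; exacts [n2.2.2.2, n2.2.1]

def Dd (R : G → G → Prop) (j : Fin n) (Z : Fin n → G × G) : ℝ :=
  isoS R (sel (Lt n j) Z) - isoS R (sel (Lt n (j+1)) Z)
def Dl (R : G → G → Prop) (j : Fin n) (Z : Fin n → G × G) : ℝ :=
  isoS R (sel ∅ Z) - isoS R (sel {j} Z)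
def Tt (R : G → G → Prop) (Z : Fin n → G × G) : ℝ := ∑ j : Fin n, (1/2) * (Dd R j Z * Dl R j Z)

lemma Lt_facts (j : Fin n) : j ∉ Lt n j ∧ j ∈ Lt n (j+1) ∧ ∀ i, i ≠ j → (i ∈ Lt n (j+1) ↔ i ∈ Lt n j) := by
  refine ⟨by simp [Lt], by simp [Lt], fun i hi => ?_⟩
  have : i.val ≠ j.val := fun h => hi (Fin.ext h)
  simp only [Lt, mem_setOf_eq]; omega

lemma Dd_bd {R : G → G → Prop} {κ : ℕ} (hp : Pack R κ) (j : Fin n) (Z) : |Dd R j Z| ≤ 1 + κ := by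
  unfold Dd
  rw [sel_insert (Lt n j) (Lt n (j+1)) j (Lt_facts j).2.1 (Lt_facts j).2.2]
  exact iso_diff hp _ _ _

lemma Dl_bd {R : G → G → Prop} {κ : ℕ} (hp : Pack R κ) (j : Fin n) (Z) : |Dl R j Z| ≤ 1 + κ := by
  unfold Dl
  rw [sel_insert ∅ {j} j rfl (by simp)]
  exact iso_diff hp _ _ _

lemma DD_bd {R : G → G → Prop} {κ : ℕ} (hp : Pack R κ) (j : Fin n) (Z) :
    |Dd R j Z * Dl R j Z| ≤ (1 + κ)^2 := by
  rw [abs_mul, sq]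
  exact mul_le_mul (Dd_bd hp j Z) (Dl_bd hp j Z) (abs_nonneg _) (by positivity)

lemma Tt_bd {R : G → G → Prop} {κ : ℕ} (hp : Pack R κ) (Z : Fin n → G × G) :
    |Tt R Z| ≤ n * (1 + κ)^2 := by
  refine (Finset.abs_sum_le_sum_abs _ _).trans ?_
  refine (Finset.sum_le_sum (g := fun _ => ((1 + κ)^2 : ℝ)) fun j _ => ?_).trans (by simp)
  rw [abs_mul]
  have := DD_bd hp j Z
  have := abs_nonneg (Dd R j Z * Dl R j Z)
  rw [abs_of_pos (by norm_num : (0:ℝ) < 1/2)]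
  linarith

def Qn (R2 : G → G → Prop) (z z' : (G × G) × (G × G)) : Prop :=
  near R2 z.1 z'.1 ∨ near R2 z.2 z'.1

def Nn {E : Type*} (Q : E → E → Prop) (i : Fin n) (z : Fin n → E) : ℝ :=
  ∑ j : Fin n, if j ≠ i ∧ Q (z i) (z j) then 1 else 0

lemma Tt_local {R R2 : G → G → Prop} (hs : ∀ a b, R a b → R b a) (hr : ∀ a, R a a)
    (h2 : ∀ a b c, R a b → R b c → R2 a c) {κ : ℕ} (hp : Pack R κ) (i : Fin n)
    (z : Fin n → (G × G) × (G × G)) :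
    |Tt R (sel ∅ z) - Tt R (sel {i} z)| ≤ (1 + κ)^2 * (1 + Nn (Qn R2) i z) := by
  unfold Tt
  rw [← Finset.sum_sub_distrib]
  refine (Finset.abs_sum_le_sum_abs _ _).trans ?_
  have : ∀ j ∈ Finset.univ, |1/2 * (Dd R j (sel ∅ z) * Dl R j (sel ∅ z)) - 1/2 * (Dd R j (sel {i} z) * Dl R j (sel {i} z))|
      ≤ (1+κ)^2 * ((if j = i then 1 else 0) + if j ≠ i ∧ Qn R2 (z i) (z j) then 1 else 0) := by
    intro j _
    have b1 := abs_le.1 (DD_bd hp j (sel ∅ z))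
    have b2 := abs_le.1 (DD_bd hp j (sel {i} z))
    have b3 : |1/2 * (Dd R j (sel ∅ z) * Dl R j (sel ∅ z)) - 1/2 * (Dd R j (sel {i} z) * Dl R j (sel {i} z))|
      ≤ (1+κ)^2 := by rw [abs_le]; constructor <;> linarith
    by_cases hj : j = i
    · subst hj
      simpa using b3
    · by_cases hq : Qn R2 (z i) (z j)
      · simp only [hj, hq, ne_eq, not_false_eq_true, true_and, if_true, if_false, zero_add, mul_one]
        exact b3
      · simp only [hj, hq, ne_eq, not_false_eq_true, and_false, if_false, zero_add, mul_zero]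
        unfold Qn at hq
        push Not at hq
        have ee : sel {i} z = Function.update (sel ∅ z) i (z i).2 := sel_insert ∅ {i} i rfl (by simp) z
        have z1 : ∀ k, (sel ∅ z) k = (z k).1 := fun k => by simp [sel]
        have f := Lt_facts j
        have d1 : Dd R j (sel {i} z) = Dd R j (sel ∅ z) := by
          rw [ee]
          exact sel_local hs hr h2 (Lt n j) (Lt n (j+1)) i j (Ne.symm hj) f.1 f.2.1 f.2.2 _ _
            (by rw [z1, z1]; exact hq.1) (by rw [z1]; exact hq.2)
        have d2 : Dl R j (sel {i} z) = Dl R j (sel ∅ z) := by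
          rw [ee]
          exact sel_local hs hr h2 ∅ {j} i j (Ne.symm hj) (by simp) rfl (by simp) _ _
            (by rw [z1, z1]; exact hq.1) (by rw [z1]; exact hq.2)
        rw [d1, d2]; simp
  refine (Finset.sum_le_sum this).trans ?_
  rw [← Finset.mul_sum, Finset.sum_add_distrib]
  apply le_of_eq
  unfold Nn
  simp

end Iso

section IsoP
variable {n : ℕ}

lemma int_ind_le {E : Type*} [MeasurableSpace E] (ν : Measure E) [IsProbabilityMeasure ν]
    (Q : E → E → Prop) (hQ : MeasurableSet {p : E × E | Q p.1 p.2}) (q : ℝ)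
    (hq : ∀ e, ν.real {e' | Q e e'} ≤ q) (i j : Fin n) (hij : j ≠ i) (h : (Fin n → E) → ℝ)
    (hm : Measurable h) (h0 : ∀ z, 0 ≤ h z) (C : ℝ) (hC : ∀ z, h z ≤ C)
    (hu : ∀ z e, h (Function.update z j e) = h z) :
    ∫ z, h z * (if Q (z i) (z j) then 1 else 0) ∂(pw n ν) ≤ q * ∫ z, h z ∂(pw n ν) := by
  have hmm : Measurable (fun z : Fin n → E => (if Q (z i) (z j) then (1:ℝ) else 0)) := by
    have : Measurable (fun z : Fin n → E => (z i, z j)) :=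
      (measurable_pi_apply i).prodMk (measurable_pi_apply j)
    exact Measurable.ite (this hQ) measurable_const measurable_const
  have hf : Measurable (fun z : Fin n → E => h z * (if Q (z i) (z j) then (1:ℝ) else 0)) := hm.mul hmm
  have hQe : ∀ e, MeasurableSet {e' | Q e e'} := fun e => measurable_prodMk_left hQ
  have hbd : ∀ z : Fin n → E, |h z * (if Q (z i) (z j) then (1:ℝ) else 0)| ≤ C := fun z => by
    have := h0 z; have := hC z
    split_ifs
    · rw [mul_one, abs_of_nonneg (h0 z)]; exact hC z
    · simp; linarith
  have hint := bdd_int ((pw n ν).prod ν) _ (hf.comp (upd_mp ν j).measurable) C (fun p => hbd _)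
  rw [← mp_integral (upd_mp ν j) _ hf]
  erw [integral_prod _ hint]
  rw [← integral_const_mul]
  refine integral_mono hint.integral_prod_left
    ((bdd_int _ h hm C fun z => by rw [abs_of_nonneg (h0 z)]; exact hC z).const_mul q) fun z => ?_
  simp only [Function.comp, hu, Function.update_self, Function.update_of_ne hij.symm]
  rw [integral_const_mul, mul_comm]
  refine mul_le_mul_of_nonneg_right ?_ (h0 z)
  have : (fun e' => if Q (z i) e' then (1:ℝ) else 0) = Set.indicator {e' | Q (z i) e'} 1 := by
    ext e'; simp [Set.indicator]
  rw [this, integral_indicator_one (hQe _)]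
  exact hq _

lemma Nn_sq {E : Type*} [MeasurableSpace E] (ν : Measure E) [IsProbabilityMeasure ν]
    (Q : E → E → Prop) (hQ : MeasurableSet {p : E × E | Q p.1 p.2}) (q : ℝ) (hq0 : 0 ≤ q)
    (hq : ∀ e, ν.real {e' | Q e e'} ≤ q) (i : Fin n) :
    ∫ z, (Nn Q i z) ^ 2 ∂(pw n ν) ≤ n * q + n ^ 2 * q ^ 2 := by
  set a : Fin n → (Fin n → E) → ℝ := fun j z => if j ≠ i ∧ Q (z i) (z j) then 1 else 0 with ha
  have am : ∀ j, Measurable (a j) := fun j => by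
    have : Measurable (fun z : Fin n → E => (z i, z j)) :=
      (measurable_pi_apply i).prodMk (measurable_pi_apply j)
    refine Measurable.ite ?_ measurable_const measurable_const
    exact (MeasurableSet.const _).inter (this hQ)
  have a0 : ∀ j z, 0 ≤ a j z := fun j z => by simp only [ha]; split_ifs <;> norm_num
  have a1 : ∀ j z, a j z ≤ 1 := fun j z => by simp only [ha]; split_ifs <;> norm_num
  have base : ∀ j, ∫ z, a j z ∂(pw n ν) ≤ q := fun j => by
    by_cases hj : j = i
    · simp [ha, hj, hq0]
    · have := int_ind_le ν Q hQ q hq i j hj (fun _ => 1) measurable_const (by simp) 1 (by simp) (by simp)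
      simpa [ha, hj] using this
  have pair : ∀ j l, ∫ z, a l z * a j z ∂(pw n ν) ≤ (if l = j then q else 0) + q ^ 2 := fun j l => by
    by_cases hlj : l = j
    · subst hlj
      have : ∀ z, a l z * a l z = a l z := fun z => by simp only [ha]; split_ifs <;> norm_num
      simp only [this, if_true]
      have := base l; nlinarith
    · rw [if_neg hlj, zero_add]
      by_cases hj : j = i
      · simp [ha, hj]; positivity
      · have := int_ind_le ν Q hQ q hq i j hj (a l) (am l) (a0 l) 1 (a1 l) (fun z e => by
          simp only [ha]
          rw [Function.update_of_ne (Ne.symm hj), Function.update_of_ne hlj])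
        have e : ∀ z, a j z = if Q (z i) (z j) then 1 else 0 := fun z => by simp [ha, hj]
        simp only [e]
        refine this.trans ?_
        have := base l
        nlinarith
  have e : ∀ z, (Nn Q i z)^2 = ∑ j, ∑ l, a l z * a j z := fun z => by
    unfold Nn
    rw [sq, Finset.sum_mul_sum]
    refine Finset.sum_congr rfl fun j _ => Finset.sum_congr rfl fun l _ => ?_
    rw [mul_comm]
  simp only [e]
  have ii : ∀ j l, Integrable (fun z => a l z * a j z) (pw n ν) := fun j l =>
    bdd_int _ _ ((am l).mul (am j)) 1 fun z => by
      rw [abs_of_nonneg (mul_nonneg (a0 _ _) (a0 _ _))]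
      exact mul_le_one₀ (a1 _ _) (a0 _ _) (a1 _ _)
  rw [integral_finsetSum _ fun j _ => integrable_finsetSum _ fun l _ => ii j l]
  have : ∀ j ∈ Finset.univ, ∫ z, ∑ l, a l z * a j z ∂(pw n ν) ≤ q + n * q^2 := fun j _ => by
    rw [integral_finsetSum _ fun l _ => ii j l]
    refine (Finset.sum_le_sum fun l _ => pair j l).trans ?_
    rw [Finset.sum_add_distrib]; simp
  refine (Finset.sum_le_sum this).trans ?_
  simp
  apply le_of_eq; ring

variable {G : Type*} [MeasurableSpace G]

lemma meas_near {R2 : G → G → Prop} (h : MeasurableSet {p : G × G | R2 p.1 p.2}) :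
    MeasurableSet {p : (G × G) × (G × G) | near R2 p.1 p.2} := by
  have m : ∀ f g : (G × G) × (G × G) → G, Measurable f → Measurable g →
      MeasurableSet {p | R2 (f p) (g p)} := fun f g hf hg => (hf.prodMk hg) h
  exact (m _ _ (by fun_prop) (by fun_prop)).union ((m _ _ (by fun_prop) (by fun_prop)).union
    ((m _ _ (by fun_prop) (by fun_prop)).union (m _ _ (by fun_prop) (by fun_prop))))

lemma meas_Qn {R2 : G → G → Prop} (h : MeasurableSet {p : G × G | R2 p.1 p.2}) :
    MeasurableSet {p : ((G × G) × (G × G)) × ((G × G) × (G × G)) | Qn R2 p.1 p.2} := by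
  have m : ∀ f g : ((G × G) × (G × G)) × ((G × G) × (G × G)) → G × G, Measurable f → Measurable g →
      MeasurableSet {p | near R2 (f p) (g p)} := fun f g hf hg => (hf.prodMk hg) (meas_near h)
  exact (m _ _ (by fun_prop) (by fun_prop)).union (m _ _ (by fun_prop) (by fun_prop))

lemma Qn_q (μ : Measure G) [IsProbabilityMeasure μ] {R2 : G → G → Prop}
    (h : MeasurableSet {p : G × G | R2 p.1 p.2}) (q : ℝ) (hq : ∀ a, μ.real {b | R2 a b} ≤ q) (z) :
    ((μ.prod μ).prod (μ.prod μ)).real {z' | Qn R2 z z'} ≤ 8 * q := by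
  have hR : ∀ a, MeasurableSet {b | R2 a b} := fun e => measurable_prodMk_left h
  have m : ∀ (f : ((G × G) × (G × G)) → G) (hf : MeasurePreserving f ((μ.prod μ).prod (μ.prod μ)) μ) (a : G),
      ((μ.prod μ).prod (μ.prod μ)).real {z' | R2 a (f z')} ≤ q := fun f hf a => by
    have := hf.measureReal_preimage (hR a).nullMeasurableSet
    exact this.le.trans (hq a)
  have m1 := m (fun z => z.1.1) (measurePreserving_fst.comp measurePreserving_fst)
  have m2 := m (fun z => z.1.2) (measurePreserving_snd.comp measurePreserving_fst)
  have : {z' | Qn R2 z z'} = (({z' | R2 z.1.1 z'.1.1} ∪ ({z' | R2 z.1.1 z'.1.2} ∪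
      ({z' | R2 z.1.2 z'.1.1} ∪ {z' | R2 z.1.2 z'.1.2}))) ∪ ({z' | R2 z.2.1 z'.1.1} ∪ ({z' | R2 z.2.1 z'.1.2} ∪
      ({z' | R2 z.2.2 z'.1.1} ∪ {z' | R2 z.2.2 z'.1.2}))) : Set ((G × G) × (G × G))) := rfl
  rw [this]
  have u := fun (s t : Set ((G × G) × (G × G))) => measureReal_union_le (μ := (μ.prod μ).prod (μ.prod μ)) s t
  refine (u _ _).trans ?_
  have h1 : ∀ e : G × G, ((μ.prod μ).prod (μ.prod μ)).real ({z' | R2 e.1 z'.1.1} ∪ ({z' | R2 e.1 z'.1.2} ∪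
      ({z' | R2 e.2 z'.1.1} ∪ {z' | R2 e.2 z'.1.2}))) ≤ 4 * q := fun e => by
    refine (u _ _).trans ?_
    have k1 := u {z' | R2 e.1 z'.1.2} ({z' | R2 e.2 z'.1.1} ∪ {z' | R2 e.2 z'.1.2})
    have k2 := u {z' | R2 e.2 z'.1.1} {z' | R2 e.2 z'.1.2}
    have := m1 e.1; have := m2 e.1; have := m1 e.2; have := m2 e.2
    linarith
  have := h1 z.1; have := h1 z.2
  linarith

theorem BE_iso (μ : Measure G) [IsProbabilityMeasure μ] (hn : 1 ≤ n) {R R2 : G → G → Prop}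
    (mR : MeasurableSet {p : G × G | R p.1 p.2}) (mR2 : MeasurableSet {p : G × G | R2 p.1 p.2})
    (hs : ∀ a b, R a b → R b a) (hr : ∀ a, R a a)
    (h2 : ∀ a b c, R a b → R b c → R2 a c) {κ : ℕ} (hp : Pack R κ)
    (q : ℝ) (hq0 : 0 ≤ q) (hq : ∀ a, μ.real {b | R2 a b} ≤ q) (σ : ℝ) (hσ : 0 < σ)
    (hvar : ∫ X, (isoS R X - ∫ Y, isoS R Y ∂(pw n μ)) ^ 2 ∂(pw n μ) = σ ^ 2) (t : ℝ) :
    |(pw n μ).real {X | (isoS R X - ∫ Y, isoS R Y ∂(pw n μ)) / σ ≤ t} - stdGaussCDF t| ≤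
      2 * (2 * √(((1+κ)^4 * (1 + 4 * (n * (8*q) + n^2 * (8*q)^2))) * n) / σ^2 +
        13/2 * (n * ((1+κ) / σ) ^ 3) + (1+κ) / σ) := by
  set m := ∫ Y, isoS R Y ∂(pw n μ) with hm
  set P := pw n (μ.prod μ) with hP
  have mS : Measurable (isoS (n := n) R) := meas_isoS mR
  have mSs : ∀ s, Measurable fun z : Fin n → G × G => isoS R (sel s z) := fun s =>
    mS.comp (sel_mp μ s).measurable
  have hmn : |m| ≤ n := by
    have := norm_integral_le_of_norm_le_const (μ := pw n μ) (f := isoS R) (C := (n:ℝ))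
      (Eventually.of_forall fun X => isoS_abs R X)
    simpa using this
  have hset : (pw n μ).real {X | (isoS R X - m) / σ ≤ t} =
      P.real {z | (isoS R (sel ∅ z) - m) / σ ≤ t} := by
    have hms : MeasurableSet {X : Fin n → G | (isoS R X - m) / σ ≤ t} :=
      measurableSet_le ((mS.sub_const m).div_const σ) measurable_const
    exact ((sel_mp μ ∅).measureReal_preimage hms.nullMeasurableSet).symm
  rw [hset]
  have hB : (0:ℝ) < 1 + κ := by positivity
  have hvar' : ∫ z, (isoS R (sel ∅ z) - m)^2 ∂P = σ^2 := by
    rw [← hvar]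
    exact mp_integral (sel_mp μ ∅) (fun X => (isoS R X - m)^2) ((mS.sub_const m).pow_const 2)
  have mTt : Measurable (Tt (n := n) R) := Finset.measurable_sum _ fun j _ =>
    (((mSs _).sub (mSs _)).mul ((mSs _).sub (mSs _))).const_mul _
  have iDD : ∀ j : Fin n, Integrable (fun z => Dd R j z * Dl R j z) P := fun j =>
    bdd_int P _ (((mSs _).sub (mSs _)).mul ((mSs _).sub (mSs _))) _ (fun z => DD_bd hp j z)
  have meanT : ∫ z, Tt R z ∂P = σ^2 := by
    have e1 := prod_identity μ (isoS (n := n) R) (isoS R) mS mS n n (isoS_abs R) (isoS_abs R)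
    have e2 : ∫ z, Tt R z ∂P = ∑ j : Fin n, (1/2) * ∫ z, (Dd R j z * Dl R j z) ∂P := by
      unfold Tt
      rw [integral_finsetSum _ fun j _ => (iDD j).const_mul _]
      simp only [integral_const_mul]
    have i1 : Integrable (fun z => isoS R (sel ∅ z)) P := bdd_int P _ (mSs ∅) n fun z => isoS_abs R _
    have i2 : Integrable (fun z => (isoS R (sel ∅ z) - m)^2) P := by
      refine bdd_int P _ (((mSs ∅).sub_const m).pow_const 2) ((n + n)^2) fun z => ?_
      rw [abs_pow]
      exact pow_le_pow_left₀ (abs_nonneg _) ((abs_sub _ _).trans (add_le_add (isoS_abs R _) hmn)) 2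
    have i3 : Integrable (fun z => isoS R (sel ∅ z) - m) P := i1.sub (integrable_const m)
    rw [e2, ← hvar']
    refine Eq.trans (Eq.symm e1) ?_
    have : ∀ z : Fin n → G × G, (isoS R (sel ∅ z) - m) * isoS R (sel ∅ z) =
      (isoS R (sel ∅ z) - m)^2 + m * (isoS R (sel ∅ z) - m) := fun z => by ring
    rw [← hm, ← hP]
    simp only [this]
    rw [integral_add i2 (i3.const_mul m), integral_const_mul, integral_sub i1 (integrable_const m),
      mp_integral (sel_mp μ ∅) (isoS R) mS]
    simp [hm]
  refine BE P n hn (fun z => isoS R (sel ∅ z)) (mSs ∅) m σ (1+κ) _ (n + n) (fun j => Dd R j)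
    (fun j z => isoS R (sel {j} z)) (fun j => (mSs _).sub (mSs _)) (fun j => mSs _) hB
    (fun j z => Dd_bd hp j z) (fun j z => Dl_bd hp j z) hσ
    (fun z => (abs_sub _ _).trans (add_le_add (isoS_abs R _) hmn)) hvar' ?_ ?_ t
  · intro F hF C hC
    exact prod_identity μ (isoS (n := n) R) (fun X => F (isoS R X)) mS (hF.comp mS) n C (isoS_abs R)
      (fun x => hC _)
  · have es := efron_stein (μ.prod μ) (Tt (n := n) R) mTt _ (Tt_bd hp)
    rw [← hP, meanT] at es
    refine es.trans ?_
    set P' := pw n ((μ.prod μ).prod (μ.prod μ)) with hP'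
    have nsq := fun i : Fin n => Nn_sq ((μ.prod μ).prod (μ.prod μ)) (Qn R2) (meas_Qn mR2) (8*q)
      (by positivity) (Qn_q μ mR2 q hq) i
    have mN : ∀ i, Measurable (Nn (n := n) (Qn R2) i) := fun i => by
      refine Finset.measurable_sum _ fun j _ => ?_
      have : Measurable (fun z : Fin n → (G × G) × (G × G) => (z i, z j)) :=
        (measurable_pi_apply i).prodMk (measurable_pi_apply j)
      refine Measurable.ite ?_ measurable_const measurable_const
      exact (MeasurableSet.const _).inter (this (meas_Qn mR2))
    have N0 : ∀ i z, 0 ≤ Nn (n := n) (Qn R2) i z := fun i z => by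
      refine Finset.sum_nonneg fun j _ => ?_
      split_ifs <;> norm_num
    have Nb : ∀ i z, Nn (n := n) (Qn R2) i z ≤ n := fun i z => by
      refine (Finset.sum_le_sum (g := fun _ => (1:ℝ)) fun j _ => ?_).trans (by simp)
      split_ifs <;> norm_num
    have iN : ∀ i : Fin n, Integrable (fun z => (Nn (Qn R2) i z)^2) P' := fun i =>
      bdd_int P' _ ((mN i).pow_const 2) (n^2) fun z => by
        rw [abs_pow]
        exact pow_le_pow_left₀ (abs_nonneg _) (by rw [abs_of_nonneg (N0 i z)]; exact Nb i z) 2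
    have mTs : ∀ s, Measurable fun z : Fin n → (G × G) × (G × G) => Tt R (sel s z) := fun s =>
      mTt.comp (sel_mp (μ.prod μ) s).measurable
    have each : ∀ i ∈ Finset.univ, (1/2) * ∫ z, (Tt (n := n) R (sel ∅ z) - Tt R (sel {i} z))^2 ∂P' ≤
        (1+κ)^4 * (1 + 4 * (n * (8*q) + n^2 * (8*q)^2)) := fun i _ => by
      have : ∫ z, (Tt (n := n) R (sel ∅ z) - Tt R (sel {i} z))^2 ∂P' ≤
          ∫ z, ((1+κ)^4 * 2 + (1+κ)^4 * 2 * (Nn (Qn R2) i z)^2) ∂P' := by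
        refine integral_mono ?_ ((integrable_const _).add ((iN i).const_mul _)) fun z => ?_
        · refine bdd_int P' _ (((mTs _).sub (mTs _)).pow_const 2) ((n * (1 + κ)^2 + n * (1 + κ)^2)^2) fun z => ?_
          rw [abs_pow]
          exact pow_le_pow_left₀ (abs_nonneg _) ((abs_sub _ _).trans (add_le_add (Tt_bd hp _) (Tt_bd hp _))) 2
        · have l := Tt_local (R2 := R2) hs hr h2 hp i z
          have := pow_le_pow_left₀ (abs_nonneg _) l 2
          rw [sq_abs] at this
          refine this.trans ?_
          have k4 : (0:ℝ) ≤ (1+κ)^4 := by positivity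
          nlinarith [mul_nonneg k4 (sq_nonneg (1 - Nn (Qn R2) i z))]
      rw [integral_add (integrable_const _) ((iN i).const_mul _)] at this
      simp only [integral_const_mul, integral_const, probReal_univ, one_smul] at this
      have k4 : (0:ℝ) ≤ (1+κ)^4 := by positivity
      have k5 : (0:ℝ) ≤ (n * (8*q) + n^2 * (8*q)^2) := by positivity
      have k6 := mul_le_mul_of_nonneg_left (nsq i) k4
      have k7 := mul_nonneg k4 k5
      rw [← hP'] at k6
      linarith only [this, k6, k7]
    refine (Finset.sum_le_sum each).trans ?_
    simp
    apply le_of_eq; ring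

end IsoP

section Var
variable {n : ℕ} {G : Type*} [MeasurableSpace G]

lemma upd_int (μ : Measure G) [IsProbabilityMeasure μ] (h : (Fin n → G) → ℝ) (hm : Measurable h)
    (C : ℝ) (hC : ∀ X, |h X| ≤ C) (k : Fin n) :
    ∫ X, h X ∂(pw n μ) = ∫ x, ∫ X, h (Function.update X k x) ∂(pw n μ) ∂μ := by
  rw [← mp_integral (upd_mp μ k) h hm]
  have hint := bdd_int ((pw n μ).prod μ) _ (hm.comp (upd_mp μ k).measurable) C (fun p => hC _)
  exact integral_prod_symm (fun p : (Fin n → G) × G => h (Function.update p.1 k p.2)) hint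

lemma pw_prod (μ : Measure G) [IsProbabilityMeasure μ] (f : Fin n → G → ℝ) :
    ∫ X, ∏ j, f j (X j) ∂(pw n μ) = ∏ j, ∫ z, f j z ∂μ :=
  integral_fintype_prod_eq_prod (μ := fun _ : Fin n => μ) f

variable [AddCommGroup G] [MeasurableAdd₂ G] [MeasurableNeg G]

def RK (K : Set G) (a b : G) : Prop := a - b ∈ K

lemma meas_RK {K : Set G} (hK : MeasurableSet K) : MeasurableSet {p : G × G | RK K p.1 p.2} := by
  have : Measurable (fun p : G × G => p.1 - p.2) := by
    simp only [sub_eq_add_neg]; exact measurable_fst.add measurable_snd.neg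
  exact this hK

variable (μ : Measure G) [IsProbabilityMeasure μ] [μ.IsAddLeftInvariant]

def Hf (K : Set G) (n : ℕ) (a : G) : ℝ :=
  if a ∈ K then 0 else (1 - μ.real (K ∪ {z | z - a ∈ K})) ^ (n - 2)

lemma real_shift (T : Set G) (hT : MeasurableSet T) (x : G) : μ.real {z | z - x ∈ T} = μ.real T := by
  simp only [measureReal_def, sub_eq_add_neg]
  exact congrArg _ (measure_preimage_add_right μ (-x) T)

lemma int_not (p : G → Prop) [DecidablePred p] (hp : MeasurableSet {z | p z}) :
    ∫ z, (if p z then (0:ℝ) else 1) ∂μ = 1 - μ.real {z | p z} := by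
  have : (fun z => if p z then (0:ℝ) else 1) = Set.indicator {z | p z}ᶜ 1 := by
    ext z; by_cases h : p z <;> simp [h]
  rw [this, integral_indicator_one hp.compl, measureReal_compl hp]; simp

lemma mean_iso {K : Set G} (hK : MeasurableSet K) (k : Fin n) :
    ∫ X, isoI (RK K) k X ∂(pw n μ) = (1 - μ.real K) ^ (n - 1) := by
  rw [upd_int μ _ (meas_isoI (meas_RK hK) k) 1 (fun X => by
    rw [abs_of_nonneg (isoI_nonneg _ _ _)]; exact isoI_le _ _ _) k]
  have : ∀ x, ∫ X, isoI (RK K) k (Function.update X k x) ∂(pw n μ) = (1 - μ.real K)^(n-1) := by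
    intro x
    have e : ∀ X : Fin n → G, isoI (RK K) k (Function.update X k x) =
        ∏ j : Fin n, (fun j z => if j = k then (1:ℝ) else (if z - x ∈ K then 0 else 1)) j (X j) := by
      intro X
      simp only [isoI, Iso, Function.update_self, RK]
      by_cases h : ∀ l, l ≠ k → X l - x ∉ K
      · rw [if_pos (fun l hl => by rw [Function.update_of_ne hl]; exact h l hl)]
        symm
        refine Finset.prod_eq_one fun j _ => ?_
        by_cases hj : j = k
        · simp [hj]
        · simp [hj, h j hj]
      · rw [if_neg (fun h' => h fun l hl => by
          have := h' l hl; rwa [Function.update_of_ne hl] at this)]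
        push Not at h
        obtain ⟨l, hl, hl'⟩ := h
        symm
        exact Finset.prod_eq_zero (Finset.mem_univ l) (by simp [hl, hl'])
    rw [integral_congr_ae (Eventually.of_forall e), pw_prod μ (fun j z => if j = k then (1:ℝ) else (if z - x ∈ K then 0 else 1))]
    have e2 : ∀ j ∈ Finset.univ, ∫ z, (if j = k then (1:ℝ) else (if z - x ∈ K then 0 else 1)) ∂μ =
        if j = k then 1 else 1 - μ.real K := by
      intro j _
      by_cases hj : j = k
      · simp [hj]
      · simp only [hj, if_false]
        have hm : MeasurableSet {z | z - x ∈ K} := by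
          simp only [sub_eq_add_neg]; exact (measurable_add_const _) hK
        rw [int_not μ (fun z => z - x ∈ K) hm, real_shift μ K hK]
    rw [Finset.prod_congr rfl e2, Finset.prod_ite]
    simp only [Finset.prod_const_one, one_mul, Finset.prod_const]
    congr 1
    rw [Finset.filter_not, Finset.card_sdiff_of_subset (Finset.filter_subset _ _), Finset.filter_eq']
    simp
  simp only [this]; simp

lemma pair_iso {K : Set G} (hK : MeasurableSet K) (sK : ∀ a, a ∈ K → -a ∈ K) (k l : Fin n) (hkl : k ≠ l) :
    ∫ X, isoI (RK K) k X * isoI (RK K) l X ∂(pw n μ) = ∫ a, Hf μ K n a ∂μ := by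
  have mI := fun k : Fin n => meas_isoI (n := n) (meas_RK hK) k
  have sh : ∀ x, Measurable fun z : G => z - x := fun x => by
    simp only [sub_eq_add_neg]; exact (measurable_add_const _)
  have b : ∀ X : Fin n → G, |isoI (RK K) k X * isoI (RK K) l X| ≤ 1 := fun X => by
    rw [abs_of_nonneg (mul_nonneg (isoI_nonneg _ _ _) (isoI_nonneg _ _ _))]
    exact mul_le_one₀ (isoI_le _ _ _) (isoI_nonneg _ _ _) (isoI_le _ _ _)
  have mm : ∀ x, Measurable fun X : Fin n → G => Function.update X k x := fun x =>
    measurable_pi_lambda _ fun i => by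
      by_cases h : i = k
      · subst h; simp
      · simp only [Function.update_of_ne h]; exact measurable_pi_apply i
  rw [upd_int μ (fun X => isoI (RK K) k X * isoI (RK K) l X) ((mI k).mul (mI l)) 1 b k]
  have : ∀ x, ∫ X, isoI (RK K) k (Function.update X k x) * isoI (RK K) l (Function.update X k x) ∂(pw n μ)
      = ∫ a, Hf μ K n a ∂μ := by
    intro x
    rw [upd_int μ (fun X => isoI (RK K) k (Function.update X k x) * isoI (RK K) l (Function.update X k x))
      (((mI k).mul (mI l)).comp (mm x)) 1 (fun X => b _) l]
    rw [← integral_sub_right_eq_self (Hf μ K n) x]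
    congr 1; ext y
    have e : ∀ X : Fin n → G, isoI (RK K) k (Function.update (Function.update X l y) k x) *
        isoI (RK K) l (Function.update (Function.update X l y) k x) =
        (if y - x ∈ K then 0 else 1) * ∏ j : Fin n, (fun j z => if j = k ∨ j = l then (1:ℝ) else
          (if z - x ∈ K ∨ z - y ∈ K then 0 else 1)) j (X j) := by
      intro X
      set Y := Function.update (Function.update X l y) k x with hY
      have Yk : Y k = x := by simp [hY]
      have Yl : Y l = y := by rw [hY, Function.update_of_ne hkl.symm]; simp
      have Yj : ∀ j, ¬ (j = k ∨ j = l) → Y j = X j := fun j hj => by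
        push Not at hj
        rw [hY, Function.update_of_ne hj.1, Function.update_of_ne hj.2]
      by_cases h : Iso (RK K) k Y ∧ Iso (RK K) l Y
      · simp only [isoI, if_pos h.1, if_pos h.2, mul_one]
        have h1 : y - x ∉ K := by
          have := h.1 l hkl.symm
          rwa [RK, Yk, Yl] at this
        rw [if_neg h1, one_mul]
        symm
        refine Finset.prod_eq_one fun j _ => ?_
        by_cases hj : j = k ∨ j = l
        · simp [hj]
        · have h3 := h.1 j (fun h => hj (Or.inl h))
          have h4 := h.2 j (fun h => hj (Or.inr h))
          rw [RK, Yj j hj, Yk] at h3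
          rw [RK, Yj j hj, Yl] at h4
          simp [hj, h3, h4]
      · have : isoI (RK K) k Y * isoI (RK K) l Y = 0 := by
          rw [not_and_or] at h
          rcases h with h | h <;> simp [isoI, h]
        rw [this]
        by_cases h1 : y - x ∈ K
        · simp [h1]
        rw [if_neg h1, one_mul]
        by_contra hne
        have nz := Finset.prod_ne_zero_iff.1 (Ne.symm hne)
        have h3 : ∀ j, ¬ (j = k ∨ j = l) → X j - x ∉ K ∧ X j - y ∉ K := by
          intro j hj
          have := nz j (Finset.mem_univ j)
          simpa [hj] using this
        refine h ⟨fun j hj => ?_, fun j hj => ?_⟩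
        · rw [RK, Yk]
          by_cases hl : j = l
          · rw [hl, Yl]; exact h1
          · rw [Yj j (by tauto)]; exact (h3 j (by tauto)).1
        · rw [RK, Yl]
          by_cases hl : j = k
          · rw [hl, Yk]; intro h; apply h1; rw [← neg_sub]; exact sK _ h
          · rw [Yj j (by tauto)]; exact (h3 j (by tauto)).2
    rw [integral_congr_ae (Eventually.of_forall e), integral_const_mul, pw_prod μ (fun j z => if j = k ∨ j = l then (1:ℝ) else
          (if z - x ∈ K ∨ z - y ∈ K then 0 else 1))]
    have hm : MeasurableSet {z | z - x ∈ K ∨ z - y ∈ K} := ((sh x) hK).union ((sh y) hK)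
    have e2 : ∀ j ∈ Finset.univ, ∫ z, (if j = k ∨ j = l then (1:ℝ) else
          (if z - x ∈ K ∨ z - y ∈ K then 0 else 1)) ∂μ =
        if j = k ∨ j = l then 1 else 1 - μ.real (K ∪ {z | z - (y - x) ∈ K}) := by
      intro j _
      by_cases hj : j = k ∨ j = l
      · simp [hj]
      · simp only [hj, if_false]
        rw [int_not μ (fun z => z - x ∈ K ∨ z - y ∈ K) hm,
          ← real_shift μ (K ∪ {z | z - (y - x) ∈ K}) (hK.union ((sh _) hK)) x]
        congr 3
        ext z
        simp only [mem_setOf_eq, mem_union]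
        rw [show z - x - (y - x) = z - y by abel]
    rw [Finset.prod_congr rfl e2, Finset.prod_ite]
    simp only [Finset.prod_const_one, one_mul, Finset.prod_const]
    rw [Finset.filter_not, Finset.card_sdiff_of_subset (Finset.filter_subset _ _)]
    have : (Finset.univ.filter fun j => j = k ∨ j = l).card = 2 := by
      rw [Finset.filter_or, Finset.filter_eq', Finset.filter_eq']
      simp [hkl]
    rw [this]
    unfold Hf
    split_ifs <;> simp
  simp only [this]; simp

lemma meas_un (ν : Measure G) [IsProbabilityMeasure ν] {K : Set G} (hK : MeasurableSet K) :
    Measurable fun a => ν.real (K ∪ {z | z - a ∈ K}) := by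
  have hT : MeasurableSet {p : G × G | p.2 ∈ K ∨ p.2 - p.1 ∈ K} := by
    refine (measurable_snd hK).union ?_
    have : Measurable (fun p : G × G => p.2 - p.1) := by
      simp only [sub_eq_add_neg]; exact measurable_snd.add measurable_fst.neg
    exact this hK
  exact (measurable_measure_prodMk_left hT).ennreal_toReal

lemma int_Hf {K K2 : Set G} (hK : MeasurableSet K) (hK2 : MeasurableSet K2) (hKK : K ⊆ K2)
    (h2 : ∀ a b, a ∈ K → b ∈ K → a - b ∈ K2) :
    ∫ a, Hf μ K n a ∂μ = ∫ a in K2 \ K, (1 - μ.real (K ∪ {z | z - a ∈ K})) ^ (n - 2) ∂μ +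
      (1 - μ.real K2) * (1 - 2 * μ.real K) ^ (n - 2) := by
  have sh : ∀ x, Measurable fun z : G => z - x := fun x => by
    simp only [sub_eq_add_neg]; exact (measurable_add_const _)
  have mu := meas_un μ hK
  have e : ∀ a, Hf μ K n a = (K2 \ K).indicator (fun a => (1 - μ.real (K ∪ {z | z - a ∈ K})) ^ (n - 2)) a +
      K2ᶜ.indicator (fun _ => (1 - 2 * μ.real K) ^ (n - 2)) a := by
    intro a
    unfold Hf
    by_cases h : a ∈ K
    · simp [h, hKK h]
    · by_cases h' : a ∈ K2
      · simp [h, h']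
      · simp only [h, if_false, h', indicator, mem_diff, false_and, mem_compl_iff, not_false_eq_true, if_true, zero_add]
        congr 2
        have hm : MeasurableSet {z | z - a ∈ K} := (sh a) hK
        rw [measureReal_union _ hm, real_shift μ K hK, two_mul]
        rw [Set.disjoint_left]
        intro z hz hz'
        apply h'
        have := h2 z (z - a) hz hz'
        simpa using this
  simp only [e]
  have bd : ∀ a, |(1 - μ.real (K ∪ {z | z - a ∈ K})) ^ (n - 2)| ≤ 1 := fun a => by
    rw [abs_pow]
    refine pow_le_one₀ (abs_nonneg _) ?_
    have := measureReal_le_one (μ := μ) (s := K ∪ {z | z - a ∈ K})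
    have h0 : 0 ≤ μ.real (K ∪ {z | z - a ∈ K}) := measureReal_nonneg
    rw [abs_le]; constructor <;> linarith
  have i1 : Integrable (fun a => (K2 \ K).indicator (fun a => (1 - μ.real (K ∪ {z | z - a ∈ K})) ^ (n - 2)) a) μ :=
    (bdd_int μ _ ((measurable_const.sub mu).pow_const _) 1 bd).indicator (hK2.diff hK)
  have i2 : Integrable (fun a => K2ᶜ.indicator (fun _ => (1 - 2 * μ.real K) ^ (n - 2)) a) μ :=
    (integrable_const _).indicator hK2.compl
  rw [integral_add i1 i2, integral_indicator (hK2.diff hK), integral_indicator hK2.compl]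
  congr 1
  rw [setIntegral_const, measureReal_compl hK2]; simp

theorem var_iso {K K2 : Set G} (hK : MeasurableSet K) (sK : ∀ a, a ∈ K → -a ∈ K)
    (hK2 : MeasurableSet K2) (hKK : K ⊆ K2) (h2 : ∀ a b, a ∈ K → b ∈ K → a - b ∈ K2) :
    ∫ X, (isoS (RK K) X - ∫ Y, isoS (RK K) Y ∂(pw n μ)) ^ 2 ∂(pw n μ) =
      n * (1 - μ.real K)^(n-1) + n * (n - 1) * (∫ a in K2 \ K, (1 - μ.real (K ∪ {z | z - a ∈ K})) ^ (n - 2) ∂μ +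
      (1 - μ.real K2) * (1 - 2 * μ.real K) ^ (n - 2)) - (n * (1 - μ.real K)^(n-1))^2 := by
  have mI := fun k : Fin n => meas_isoI (n := n) (meas_RK hK) k
  have mS := meas_isoS (n := n) (meas_RK hK)
  have iI : ∀ k, Integrable (fun X : Fin n → G => isoI (RK K) k X) (pw n μ) := fun k =>
    bdd_int _ _ (mI k) 1 fun X => by
      rw [abs_of_nonneg (isoI_nonneg _ _ _)]; exact isoI_le _ _ _
  have iII : ∀ k l, Integrable (fun X : Fin n → G => isoI (RK K) k X * isoI (RK K) l X) (pw n μ) := fun k l =>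
    bdd_int _ _ ((mI k).mul (mI l)) 1 fun X => by
    rw [abs_of_nonneg (mul_nonneg (isoI_nonneg _ _ _) (isoI_nonneg _ _ _))]
    exact mul_le_one₀ (isoI_le _ _ _) (isoI_nonneg _ _ _) (isoI_le _ _ _)
  have hmean : ∫ Y, isoS (RK K) Y ∂(pw n μ) = n * (1 - μ.real K)^(n-1) := by
    unfold isoS
    rw [integral_finsetSum _ fun k _ => iI k]
    simp [mean_iso μ hK]
  set m := ∫ Y, isoS (RK K) Y ∂(pw n μ) with hm
  have iS : Integrable (fun X : Fin n → G => isoS (RK K) X) (pw n μ) :=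
    bdd_int _ _ mS n (isoS_abs _)
  have sqe : ∀ X : Fin n → G, isoS (RK K) X ^ 2 = ∑ k, ∑ l, isoI (RK K) k X * isoI (RK K) l X := fun X => by
    unfold isoS; rw [sq, Finset.sum_mul_sum]
  have iS2 : Integrable (fun X : Fin n → G => isoS (RK K) X ^ 2) (pw n μ) := by
    simp only [sqe]
    exact integrable_finsetSum _ fun k _ => integrable_finsetSum _ fun l _ => iII k l
  have h2m : ∫ X, isoS (RK K) X ^ 2 ∂(pw n μ) = n * (1 - μ.real K)^(n-1) + n * (n-1) * ∫ a, Hf μ K n a ∂μ := by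
    simp only [sqe]
    rw [integral_finsetSum _ fun k _ => integrable_finsetSum _ fun l _ => iII k l]
    have : ∀ k ∈ Finset.univ, ∫ X, ∑ l : Fin n, isoI (RK K) k X * isoI (RK K) l X ∂(pw n μ) =
        (1 - μ.real K)^(n-1) + (n - 1) * ∫ a, Hf μ K n a ∂μ := by
      intro k _
      rw [integral_finsetSum _ fun l _ => iII k l]
      have : ∀ l ∈ Finset.univ, ∫ X, isoI (RK K) k X * isoI (RK K) l X ∂(pw n μ) =
          (if l = k then (1 - μ.real K)^(n-1) - ∫ a, Hf μ K n a ∂μ else 0) + ∫ a, Hf μ K n a ∂μ := by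
        intro l _
        by_cases h : l = k
        · subst h
          have : ∀ X : Fin n → G, isoI (RK K) l X * isoI (RK K) l X = isoI (RK K) l X := fun X => by
            unfold isoI; split_ifs <;> simp
          simp only [this, mean_iso μ hK, if_true]; ring
        · rw [if_neg h, zero_add, pair_iso μ hK sK k l (Ne.symm h)]
      rw [Finset.sum_congr rfl this, Finset.sum_add_distrib]
      simp; ring
    rw [Finset.sum_congr rfl this]
    simp; ring
  rw [← int_Hf μ hK hK2 hKK h2, ← h2m, ← hmean]
  have : ∀ X : Fin n → G, (isoS (RK K) X - m)^2 = isoS (RK K) X ^ 2 - ((2*m) * isoS (RK K) X - m^2) := fun X => by ring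
  simp only [this]
  have i4 : Integrable (fun X : Fin n → G => (2*m) * isoS (RK K) X) (pw n μ) := iS.const_mul _
  have i3 : Integrable (fun X : Fin n → G => (2*m) * isoS (RK K) X - m^2) (pw n μ) := i4.sub (integrable_const _)
  rw [integral_sub iS2 i3, integral_sub i4 (integrable_const _), integral_const_mul, ← hm]
  simp; ring

end Var

section Torus
variable {d : ℕ}

def Nd (L : ℝ) (a : Fin d → AddCircle L) : ℝ := √(∑ i, ‖a i‖ ^ 2)

lemma Nd_eq (L : ℝ) (a : Fin d → AddCircle L) :
    Nd L a = ‖(WithLp.toLp 2 a : PiLp 2 fun _ : Fin d => AddCircle L)‖ := by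
  rw [PiLp.norm_eq_of_L2]; rfl

lemma Nd_sub (L : ℝ) (a b : Fin d → AddCircle L) : Nd L (a - b) ≤ Nd L a + Nd L b := by
  simp only [Nd_eq]
  exact norm_sub_le (WithLp.toLp 2 a : PiLp 2 fun _ : Fin d => AddCircle L) (WithLp.toLp 2 b)

lemma Nd_neg (L : ℝ) (a : Fin d → AddCircle L) : Nd L (-a) = Nd L a := by
  unfold Nd; simp

lemma Nd_zero (L : ℝ) : Nd L (0 : Fin d → AddCircle L) = 0 := by
  unfold Nd; simp

lemma Nd_coord (L : ℝ) (a : Fin d → AddCircle L) (i : Fin d) : ‖a i‖ ≤ Nd L a := by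
  unfold Nd
  apply Real.le_sqrt_of_sq_le
  exact Finset.single_le_sum (f := fun i => ‖a i‖^2) (fun i _ => sq_nonneg _) (Finset.mem_univ i)

def KT (d : ℕ) (L r : ℝ) : Set (Fin d → AddCircle L) := {a | Nd L a ≤ r}

def pE (L : ℝ) (x : EuclideanSpace ℝ (Fin d)) : Fin d → AddCircle L := fun i => (x i : AddCircle L)

lemma pE_sub (L : ℝ) (x y : EuclideanSpace ℝ (Fin d)) : pE L (x - y) = pE L x - pE L y := by
  ext i; simp [pE]

lemma nrm_le (L : ℝ) (t : ℝ) : ‖(t : AddCircle L)‖ ≤ |t| := by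
  exact QuotientAddGroup.norm_mk_le_norm (S := AddSubgroup.zmultiples L) (m := t)

lemma Nd_le (L : ℝ) (x : EuclideanSpace ℝ (Fin d)) : Nd L (pE L x) ≤ ‖x‖ := by
  rw [EuclideanSpace.norm_eq]
  unfold Nd
  refine Real.sqrt_le_sqrt (Finset.sum_le_sum fun i _ => ?_)
  exact pow_le_pow_left₀ (norm_nonneg _) (nrm_le L (x i)) 2

lemma Nd_norm (L : ℝ) (x : EuclideanSpace ℝ (Fin d)) (h : ∀ i, ‖(x i : AddCircle L)‖ = |x i|) :
    Nd L (pE L x) = ‖x‖ := by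
  rw [EuclideanSpace.norm_eq]
  unfold Nd
  congr 1
  refine Finset.sum_congr rfl fun i _ => ?_
  rw [pE, h]; rfl

lemma nrm_half {L : ℝ} (hL : 0 < L) {t : ℝ} (h : |t| ≤ L / 2) : ‖(t : AddCircle L)‖ = |t| := by
  rw [AddCircle.norm_coe_eq_abs_iff L hL.ne', abs_of_pos hL]; exact h

lemma nrm_loc {L : ℝ} (hL : 0 < L) {t r : ℝ} (h1 : ‖(t : AddCircle L)‖ ≤ r) (h2 : |t| < L - r) :
    ‖(t : AddCircle L)‖ = |t| := by
  rw [AddCircle.norm_eq] at h1 ⊢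
  have h3 : |(round (L⁻¹ * t) : ℝ) * L| < L := by
    have : (round (L⁻¹ * t) : ℝ) * L = t - (t - (round (L⁻¹ * t) : ℝ) * L) := by ring
    rw [this]
    have := abs_sub t (t - (round (L⁻¹ * t) : ℝ) * L)
    linarith
  have h4 : round (L⁻¹ * t) = 0 := by
    rw [abs_mul, abs_of_pos hL] at h3
    have : |(round (L⁻¹ * t) : ℝ)| < 1 := by
      by_contra h; push Not at h; nlinarith
    rw [← Int.cast_abs] at this
    have : |round (L⁻¹ * t)| < 1 := by exact_mod_cast this
    exact Int.abs_lt_one_iff.1 this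
  rw [h4]; simp

lemma Nd_loc {L r : ℝ} (hL : 0 < L) (x : EuclideanSpace ℝ (Fin d)) (h1 : Nd L (pE L x) ≤ r)
    (h2 : ∀ i, |x i| < L - r) : ‖x‖ ≤ r := by
  rw [← Nd_norm L x fun i => nrm_loc hL ((Nd_coord L (pE L x) i).trans h1) (h2 i)]
  exact h1

lemma E_coord (x : EuclideanSpace ℝ (Fin d)) (i : Fin d) : |x i| ≤ ‖x‖ := by
  rw [EuclideanSpace.norm_eq]
  apply Real.le_sqrt_of_sq_le
  rw [sq_abs]
  have := Finset.single_le_sum (f := fun i => ‖x i‖^2) (fun i _ => sq_nonneg _) (Finset.mem_univ i)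
  simpa using this

/-- lift -/
lemma lift_ex {L : ℝ} (hL : 0 < L) (a : Fin d → AddCircle L) :
    ∃ x : EuclideanSpace ℝ (Fin d), pE L x = a ∧ ‖x‖ = Nd L a := by
  have : ∀ i, ∃ t : ℝ, (t : AddCircle L) = a i ∧ |t| = ‖a i‖ := by
    intro i
    obtain ⟨t, ht⟩ := QuotientAddGroup.mk_surjective (a i)
    refine ⟨t - round (L⁻¹ * t) * L, ?_, ?_⟩
    · rw [← ht]
      have : ((round (L⁻¹ * t) * L : ℝ) : AddCircle L) = 0 := by
        rw [AddCircle.coe_eq_zero_iff]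
        exact ⟨round (L⁻¹ * t), by simp⟩
      rw [AddCircle.coe_sub, this, sub_zero]
    · rw [← ht]; exact (AddCircle.norm_eq L).symm
  choose t h1 h2 using this
  refine ⟨WithLp.toLp 2 t, by ext i; simp [pE, h1], ?_⟩
  rw [← Nd_norm L (WithLp.toLp 2 t) (fun i => by simp [h1, h2])]
  congr 1; ext i; simp [pE, h1]

lemma pack_torus {L ρ : ℝ} (hL : 0 < L) (hρ : 0 < ρ) : Pack (RK (KT d L ρ)) (5 ^ d) := by
  intro n X x s h1 h2
  choose v hv hv' using fun k => lift_ex hL (x - X k)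
  have hvs : ∀ k l, pE L (v k - v l) = X l - X k := fun k l => by
    rw [pE_sub, hv, hv]; abel
  have sep : ∀ k ∈ s, ∀ l ∈ s, k ≠ l → ρ < ‖v k - v l‖ := by
    intro k hk l hl hkl
    have := h2 k hk l hl hkl.symm
    simp only [RK, KT, mem_setOf_eq, not_le] at this
    rw [← hvs] at this
    exact this.trans_le (Nd_le L _)
  let w : Fin n → EuclideanSpace ℝ (Fin d) := fun k => ρ⁻¹ • v k
  have wsep : ∀ k ∈ s, ∀ l ∈ s, k ≠ l → 1 ≤ ‖w k - w l‖ := by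
    intro k hk l hl hkl
    have := sep k hk l hl hkl
    simp only [w]
    rw [← smul_sub, norm_smul, Real.norm_eq_abs, abs_of_pos (inv_pos.2 hρ), ← div_eq_inv_mul, le_div_iff₀ hρ]
    linarith
  have inj : Set.InjOn w s := by
    intro k hk l hl h
    by_contra hkl
    have := wsep k hk l hl hkl
    rw [h] at this; simp at this; linarith
  rw [← Finset.card_image_of_injOn inj]
  have := Besicovitch.card_le_of_separated (s.image w) (fun c hc => ?_) (fun c hc c' hc' hne => ?_)
  · simpa using this
  · obtain ⟨k, hk, rfl⟩ := Finset.mem_image.1 hc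
    have := h1 k hk
    simp only [RK, KT, mem_setOf_eq] at this
    rw [← hv'] at this
    simp only [w]
    rw [norm_smul, Real.norm_eq_abs, abs_of_pos (inv_pos.2 hρ), ← div_eq_inv_mul, div_le_iff₀ hρ]
    linarith
  · obtain ⟨k, hk, rfl⟩ := Finset.mem_image.1 hc
    obtain ⟨l, hl, rfl⟩ := Finset.mem_image.1 hc'
    exact wsep k hk l hl fun h => hne (by rw [h])

variable (L : ℝ) [hL : Fact (0 < L)]

lemma KT_meas (r : ℝ) : MeasurableSet (KT d L r) := by
  have : Measurable (Nd (d := d) L) := by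
    unfold Nd
    refine Real.continuous_sqrt.measurable.comp (Finset.measurable_sum _ fun i _ => ?_)
    exact ((measurable_pi_apply i).norm).pow_const 2
  exact measurableSet_le this measurable_const

def muT (d : ℕ) (L : ℝ) [Fact (0 < L)] : Measure (Fin d → AddCircle L) :=
  ((L.toNNReal ^ d)⁻¹ : ℝ≥0) • (volume : Measure (Fin d → AddCircle L))

lemma Lnn_ne : L.toNNReal ≠ 0 := by
  simpa using hL.out

instance : IsProbabilityMeasure (muT d L) := by
  constructor
  have h0 := Lnn_ne L
  rw [muT, Measure.smul_apply, volume_pi, Measure.pi_univ]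
  simp only [AddCircle.measure_univ, Finset.prod_const, Finset.card_univ, Fintype.card_fin]
  rw [ENNReal.ofReal, ENNReal.smul_def, smul_eq_mul, ← ENNReal.coe_pow, ← ENNReal.coe_mul,
    inv_mul_cancel₀ (pow_ne_zero _ h0)]
  rfl

instance : (volume : Measure (Fin d → AddCircle L)).IsAddLeftInvariant := by
  rw [volume_pi]; infer_instance

instance : (muT d L).IsAddLeftInvariant := by
  unfold muT; infer_instance

lemma box_mp : MeasurePreserving (fun (x : Fin d → ℝ) i => (x i : AddCircle L)) (uniformBox d L) (muT d L) := by
  unfold uniformBox muT box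
  apply MeasurePreserving.smul_measure
  rw [volume_pi, Measure.restrict_pi_pi, volume_pi]
  refine measurePreserving_pi _ _ (f := fun _ (t : ℝ) => (t : AddCircle L)) fun i => ?_
  have := AddCircle.measurePreserving_mk L 0
  rw [zero_add] at this
  rwa [Measure.restrict_congr_set Ico_ae_eq_Ioc]

def cubeE (d : ℕ) (L : ℝ) : Set (EuclideanSpace ℝ (Fin d)) := {x | ∀ i, x i ∈ Ioc (-(L/2)) (-(L/2) + L)}

lemma cubeE_meas : MeasurableSet (cubeE d L) := by
  have : cubeE d L = ⋂ i, (fun x : EuclideanSpace ℝ (Fin d) => x i) ⁻¹' Ioc (-(L/2)) (-(L/2) + L) := by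
    ext x; simp [cubeE]
  rw [this]
  refine MeasurableSet.iInter fun i => ?_
  exact measurableSet_Ioc.preimage (by fun_prop)

lemma pE_mp : MeasurePreserving (pE (d := d) L) (volume.restrict (cubeE d L)) volume := by
  have h1 : MeasurePreserving (fun (x : Fin d → ℝ) i => (x i : AddCircle L))
      (volume.restrict (univ.pi fun _ => Ioc (-(L/2)) (-(L/2) + L))) volume := by
    rw [volume_pi, Measure.restrict_pi_pi, volume_pi]
    exact measurePreserving_pi _ _ (f := fun _ (t : ℝ) => (t : AddCircle L)) fun i =>
      AddCircle.measurePreserving_mk L _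
  have h2 := (EuclideanSpace.volume_preserving_symm_measurableEquiv_toLp (Fin d)).restrict_preimage
    (s := univ.pi fun _ => Ioc (-(L/2)) (-(L/2) + L)) (MeasurableSet.univ_pi fun _ => measurableSet_Ioc)
  have h3 := h1.comp h2
  have e : (MeasurableEquiv.toLp 2 (Fin d → ℝ)).symm ⁻¹' (univ.pi fun _ => Ioc (-(L/2)) (-(L/2) + L)) = cubeE d L := by
    ext x; simp [cubeE]
  rw [e] at h3
  exact h3

lemma muT_real (A : Set (Fin d → AddCircle L)) (hA : MeasurableSet A) :
    (muT d L).real A = (volume.real (pE L ⁻¹' A ∩ cubeE d L)) / L ^ d := by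
  have h := (pE_mp (d := d) L).measureReal_preimage hA.nullMeasurableSet
  rw [measureReal_restrict_apply ((pE_mp L).measurable hA)] at h
  rw [h, muT, measureReal_nnreal_smul_apply]
  simp only [NNReal.coe_inv, NNReal.coe_pow, Real.coe_toNNReal _ hL.out.le]
  rw [div_eq_inv_mul]

lemma cube_of {x : EuclideanSpace ℝ (Fin d)} {r : ℝ} (hx : ‖x‖ ≤ r) (hr : r < L / 2) : x ∈ cubeE d L := by
  intro i
  have := abs_le.1 ((E_coord x i).trans hx)
  constructor <;> linarith

lemma cube_abs {x : EuclideanSpace ℝ (Fin d)} (hx : x ∈ cubeE d L) (i) : |x i| ≤ L/2 := by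
  have := hx i
  rw [abs_le]; constructor <;> linarith [this.1, this.2]

lemma pre_KT {r : ℝ} (hr : r < L / 2) : pE L ⁻¹' (KT d L r) ∩ cubeE d L = closedBall 0 r := by
  ext x
  simp only [mem_inter_iff, mem_preimage, KT, mem_setOf_eq, mem_closedBall_zero_iff]
  constructor
  · rintro ⟨h1, h2⟩
    rwa [Nd_norm L x fun i => nrm_half hL.out (cube_abs L h2 i)] at h1
  · intro h
    exact ⟨(Nd_le L x).trans h, cube_of L h hr⟩

lemma vol_KT {r : ℝ} (hr : r < L / 2) : (muT d L).real (KT d L r) =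
    volume.real (closedBall (0 : EuclideanSpace ℝ (Fin d)) r) / L ^ d := by
  rw [muT_real L _ (KT_meas L r), pre_KT L hr]

lemma vol_un {ρ : ℝ} (hρ : 0 < ρ) (h6 : 6 * ρ < L) (x : EuclideanSpace ℝ (Fin d)) (hx : ‖x‖ ≤ 2 * ρ) :
    (muT d L).real (KT d L ρ ∪ {z | z - pE L x ∈ KT d L ρ}) =
    volume.real (closedBall 0 ρ ∪ closedBall x ρ) / L ^ d := by
  have sh : Measurable fun z : Fin d → AddCircle L => z - pE L x := by
    simp only [sub_eq_add_neg]; exact (measurable_add_const _)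
  have hm : MeasurableSet {z | z - pE L x ∈ KT d L ρ} := sh (KT_meas L ρ)
  rw [muT_real L _ ((KT_meas L ρ).union hm), preimage_union, union_inter_distrib_right, pre_KT L (by linarith)]
  congr 3
  ext z
  simp only [mem_inter_iff, mem_preimage, mem_setOf_eq, mem_closedBall, dist_eq_norm]
  rw [← pE_sub]
  constructor
  · rintro ⟨h1, h2⟩
    refine Nd_loc hL.out _ h1 fun i => ?_
    have a1 := cube_abs L h2 i
    have a2 := (E_coord x i).trans hx
    have := abs_sub (z i) (x i)
    simp only [PiLp.sub_apply]
    linarith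
  · intro h
    refine ⟨(Nd_le L _).trans h, cube_of L (r := 3 * ρ) ?_ (by linarith)⟩
    calc ‖z‖ = ‖(z - x) + x‖ := by simp
      _ ≤ ‖z - x‖ + ‖x‖ := norm_add_le _ _
      _ ≤ 3 * ρ := by linarith

lemma int_ring {ρ : ℝ} (hρ : 0 < ρ) (h6 : 6 * ρ < L) (n : ℕ) :
    ∫ a in KT d L (2 * ρ) \ KT d L ρ, (1 - (muT d L).real (KT d L ρ ∪ {z | z - a ∈ KT d L ρ})) ^ n ∂(muT d L) =
    (L ^ d)⁻¹ * ∫ x in closedBall (0 : EuclideanSpace ℝ (Fin d)) (2 * ρ) \ closedBall 0 ρ,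
      (1 - volume.real (closedBall 0 ρ ∪ closedBall x ρ) / L ^ d) ^ n := by
  have hm : MeasurableSet (KT d L (2 * ρ) \ KT d L ρ) := (KT_meas L _).diff (KT_meas L _)
  set f : (Fin d → AddCircle L) → ℝ :=
    fun a => (1 - (muT d L).real (KT d L ρ ∪ {z | z - a ∈ KT d L ρ})) ^ n with hf
  have mf : Measurable f := (measurable_const.sub (meas_un (muT d L) (KT_meas L ρ))).pow_const n
  rw [show (muT d L).restrict (KT d L (2 * ρ) \ KT d L ρ) = ((L.toNNReal ^ d)⁻¹ : ℝ≥0) •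
    (volume : Measure (Fin d → AddCircle L)).restrict (KT d L (2 * ρ) \ KT d L ρ) by
      rw [muT, Measure.restrict_smul], integral_smul_nnreal_measure, NNReal.smul_def, smul_eq_mul]
  simp only [NNReal.coe_inv, NNReal.coe_pow, Real.coe_toNNReal _ hL.out.le]
  congr 1
  rw [← integral_indicator hm, ← mp_integral (pE_mp L) _ (mf.indicator hm)]
  have e : ∀ x, (KT d L (2 * ρ) \ KT d L ρ).indicator f (pE L x) =
      (pE L ⁻¹' (KT d L (2 * ρ) \ KT d L ρ)).indicator (fun x => f (pE L x)) x := fun x => rfl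
  simp only [e]
  have hm' := (pE_mp (d := d) L).measurable hm
  rw [integral_indicator hm', Measure.restrict_restrict hm']
  have s : pE L ⁻¹' (KT d L (2 * ρ) \ KT d L ρ) ∩ cubeE d L =
      closedBall (0 : EuclideanSpace ℝ (Fin d)) (2 * ρ) \ closedBall 0 ρ := by
    rw [← pre_KT L (by linarith : ρ < L / 2), ← pre_KT L (by linarith : 2 * ρ < L / 2)]
    ext x
    simp only [mem_inter_iff, mem_preimage, mem_diff]
    tauto
  rw [s]
  refine setIntegral_congr_fun (measurableSet_closedBall.diff measurableSet_closedBall) fun x hx => ?_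
  simp only [hf]
  rw [vol_un L hρ h6 x (by simpa using hx.1)]

end Torus

section Transfer
variable {d : ℕ} {n : ℕ}

lemma iInf_nrm (L : ℝ) (t : ℝ) : ⨅ k : ℤ, |t - k * L| = ‖(t : AddCircle L)‖ := by
  apply le_antisymm
  · rw [AddCircle.norm_eq]
    exact ciInf_le (f := fun k : ℤ => |t - k * L|) ⟨0, by rintro _ ⟨k, rfl⟩; positivity⟩ (round (L⁻¹ * t))
  · refine le_ciInf fun k => ?_
    have : ((k * L : ℝ) : AddCircle L) = 0 := by
      rw [AddCircle.coe_eq_zero_iff]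
      exact ⟨k, by simp⟩
    have h := nrm_le L (t - k * L)
    rwa [AddCircle.coe_sub, this, sub_zero] at h

def pT (L : ℝ) (x : Fin d → ℝ) : Fin d → AddCircle L := fun i => (x i : AddCircle L)

lemma torDist_eq (L : ℝ) (x y : Fin d → ℝ) : torDist L x y = Nd L (pT L x - pT L y) := by
  unfold torDist Nd
  simp only [iInf_nrm]
  simp [pT]

lemma isol_good {ρ : ℝ} (hρ : 0 < ρ) (ω : Fin n → Fin d → ℝ) (hb : ∀ i, ω i ∈ box d (sideLen d n))
    (hi : ∀ i j, j ≠ i → ω i ≠ ω j) :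
    isolCount d n ρ ω = isoS (RK (KT d (sideLen d n) ρ)) (fun i => pT (sideLen d n) (ω i)) := by
  unfold isolCount isoS isoI
  refine Finset.sum_congr rfl fun i _ => ?_
  have : (Set.range ω ∩ torBall (sideLen d n) (ω i) ρ = {ω i}) ↔
      Iso (RK (KT d (sideLen d n) ρ)) i (fun i => pT (sideLen d n) (ω i)) := by
    have key : ∀ l, RK (KT d (sideLen d n) ρ) (pT (sideLen d n) (ω l)) (pT (sideLen d n) (ω i)) ↔
        torDist (sideLen d n) (ω i) (ω l) ≤ ρ := fun l => by
      rw [torDist_eq, ← Nd_neg, neg_sub]; rfl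
    constructor
    · intro h l hl hR
      rw [key] at hR
      have : ω l ∈ Set.range ω ∩ torBall (sideLen d n) (ω i) ρ := ⟨⟨l, rfl⟩, hb l, hR⟩
      rw [h] at this
      exact hi l i hl.symm this
    · intro h
      apply Set.Subset.antisymm
      · rintro _ ⟨⟨l, rfl⟩, _, h2⟩
        by_cases hl : l = i
        · rw [hl]; rfl
        · exact absurd ((key l).2 h2) (h l hl)
      · rintro _ rfl
        refine ⟨⟨i, rfl⟩, hb i, ?_⟩
        rw [torDist_eq, sub_self, Nd_zero]; exact hρ.le
  simp only [this]

variable (L : ℝ) [hL : Fact (0 < L)]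

instance ubProb : IsProbabilityMeasure (uniformBox d L) := by
  constructor
  have := (box_mp (d := d) L).measure_preimage MeasurableSet.univ.nullMeasurableSet
  rw [preimage_univ] at this
  rw [this]; exact measure_univ

lemma box_meas : MeasurableSet (box d L) := MeasurableSet.univ_pi fun _ => measurableSet_Ico

lemma ub_ae : ∀ᵐ x ∂(uniformBox d L), x ∈ box d L := by
  unfold uniformBox
  exact Measure.ae_smul_measure (ae_restrict_mem (box_meas L)) _

lemma ub_pt (hd : 1 ≤ d) (x : Fin d → ℝ) : (uniformBox d L).real {y | x = y} = 0 := by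
  haveI : Nonempty (Fin d) := ⟨⟨0, hd⟩⟩
  have : {y | x = y} = {x} := by ext y; simp [eq_comm]
  rw [this, measureReal_def, uniformBox, Measure.smul_apply]
  have : (volume.restrict (box d L)) {x} = 0 := by
    apply le_antisymm _ zero_le
    refine (Measure.restrict_apply_le _ _).trans ?_
    rw [measure_singleton]
  rw [this]; simp

lemma ae_good (hd : 1 ≤ d) : ∀ᵐ ω ∂(pw n (uniformBox d L)), (∀ i, ω i ∈ box d L) ∧
    ∀ i j, j ≠ i → ω i ≠ ω j := by
  have h1 : ∀ᵐ ω ∂(pw n (uniformBox d L)), ∀ i, ω i ∈ box d L := by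
    rw [ae_all_iff]; intro i
    exact (measurePreserving_eval (fun _ : Fin n => uniformBox d L) i).quasiMeasurePreserving.ae (ub_ae L)
  have h2 : ∀ᵐ ω ∂(pw n (uniformBox d L)), ∀ i j, j ≠ i → ω i ≠ ω j := by
    rw [ae_all_iff]; intro i
    rw [ae_all_iff]; intro j
    by_cases hij : j = i
    · simp [hij]
    have mQ : MeasurableSet {p : (Fin d → ℝ) × (Fin d → ℝ) | p.1 = p.2} :=
      measurableSet_eq_fun measurable_fst measurable_snd
    have := int_ind_le (n := n) (uniformBox d L) (fun a b => a = b) mQ 0 (fun e => (ub_pt L hd e).le) i j hij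
      (fun _ => 1) measurable_const (by simp) 1 (by simp) (by simp)
    have mS : MeasurableSet {z : Fin n → Fin d → ℝ | z i = z j} :=
      measurableSet_eq_fun (measurable_pi_apply i) (measurable_pi_apply j)
    replace this : ∫ z, Set.indicator {z : Fin n → Fin d → ℝ | z i = z j} (1 : (Fin n → Fin d → ℝ) → ℝ) z ∂(pw n (uniformBox d L)) ≤
        0 * ∫ z : Fin n → Fin d → ℝ, (1:ℝ) ∂(pw n (uniformBox d L)) := by
      refine le_of_eq_of_le (integral_congr_ae (Eventually.of_forall fun z => ?_)) this
      simp [Set.indicator_apply]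
    rw [integral_indicator_one mS, zero_mul] at this
    have h0 : (pw n (uniformBox d L)).real {z | z i = z j} = 0 := le_antisymm this measureReal_nonneg
    haveI : IsProbabilityMeasure (pw n (uniformBox d L)) := by unfold pw; infer_instance
    rw [measureReal_eq_zero_iff] at h0
    have := (measure_eq_zero_iff_ae_notMem).1 h0
    filter_upwards [this] with ω hω _ using hω
  filter_upwards [h1, h2] with ω a b using ⟨a, b⟩

lemma kol_transfer {Ω Ω' : Type*} [MeasurableSpace Ω] [MeasurableSpace Ω'] {P : Measure Ω} {P' : Measure Ω'}
    [IsProbabilityMeasure P]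
    {T : Ω → Ω'} (hT : MeasurePreserving T P P') (X : Ω → ℝ) (S : Ω' → ℝ) (mS : Measurable S)
    (h : X =ᵐ[P] fun ω => S (T ω)) :
    kolDist P X = ⨆ t : ℝ, |P'.real {x | (S x - ∫ y, S y ∂P') / √(∫ x, (S x - ∫ y, S y ∂P') ^ 2 ∂P') ≤ t} -
      stdGaussCDF t| := by
  unfold kolDist
  have e1 : ∫ x, X x ∂P = ∫ y, S y ∂P' := by rw [integral_congr_ae h, mp_integral hT _ mS]
  have e2 : variance X P = ∫ x, (S x - ∫ y, S y ∂P') ^ 2 ∂P' := by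
    rw [variance_congr h, variance_eq_integral (X := fun ω => S (T ω)) (mS.comp hT.measurable).aemeasurable, mp_integral hT _ mS,
      mp_integral hT (fun x => (S x - ∫ y, S y ∂P') ^ 2) ((mS.sub_const _).pow_const 2)]
  refine iSup_congr fun t => ?_
  rw [e1, e2]
  congr 2
  have mt : MeasurableSet {x | (S x - ∫ y, S y ∂P') / √(∫ x, (S x - ∫ y, S y ∂P') ^ 2 ∂P') ≤ t} :=
    measurableSet_le ((mS.sub_const _).div_const _) measurable_const
  rw [measureReal_def, ← hT.measure_preimage mt.nullMeasurableSet]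
  congr 1
  apply measure_congr
  filter_upwards [h] with ω hω
  apply propext
  change (_ ≤ t) ↔ (_ ≤ t)
  rw [hω]

end Transfer

lemma sideLen_pos (d : ℕ) {n : ℕ} (hn : 1 ≤ n) : 0 < sideLen d n := by
  unfold sideLen
  have : (0:ℝ) < n := by exact_mod_cast hn
  positivity

lemma sideLen_pow {d : ℕ} (hd : 1 ≤ d) (n : ℕ) : sideLen d n ^ d = n := by
  unfold sideLen
  exact Real.rpow_inv_natCast_pow (Nat.cast_nonneg n) (by omega)

lemma kol_eq {d n : ℕ} (hd : 1 ≤ d) {ρ : ℝ} (hρ : 0 < ρ) [Fact (0 < sideLen d n)] :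
    kolDist (binppLaw d n) (isolCount d n ρ) =
    ⨆ t : ℝ, |(pw n (muT d (sideLen d n))).real {X | (isoS (RK (KT d (sideLen d n) ρ)) X -
        ∫ Y, isoS (RK (KT d (sideLen d n) ρ)) Y ∂(pw n (muT d (sideLen d n)))) /
      √(∫ X, (isoS (RK (KT d (sideLen d n) ρ)) X -
        ∫ Y, isoS (RK (KT d (sideLen d n) ρ)) Y ∂(pw n (muT d (sideLen d n)))) ^ 2 ∂(pw n (muT d (sideLen d n)))) ≤ t} -
      stdGaussCDF t| := by
  have hT : MeasurePreserving (fun (ω : Fin n → Fin d → ℝ) i => pT (sideLen d n) (ω i))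
      (pw n (uniformBox d (sideLen d n))) (pw n (muT d (sideLen d n))) :=
    measurePreserving_pi _ _ (f := fun _ => pT (sideLen d n)) fun _ => box_mp (sideLen d n)
  haveI : IsProbabilityMeasure (pw n (uniformBox d (sideLen d n))) := by unfold pw; infer_instance
  refine kol_transfer hT (isolCount d n ρ) _ (meas_isoS (meas_RK (KT_meas (sideLen d n) ρ))) ?_
  filter_upwards [ae_good (n := n) (sideLen d n) hd] with ω hω
  exact isol_good hρ ω hω.1 hω.2

section Lim

lemma pow_lim (x : ℝ) (k : ℕ) : Tendsto (fun n : ℕ => (1 + x / n) ^ (n - k)) atTop (𝓝 (Real.exp x)) := by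
  have h1 := Real.tendsto_one_add_div_pow_exp x
  have h0 : Tendsto (fun n : ℕ => 1 + x / (n:ℝ)) atTop (𝓝 1) := by
    have : Tendsto (fun n : ℕ => x / (n:ℝ)) atTop (𝓝 0) := tendsto_const_div_atTop_nhds_zero_nat x
    simpa using this.const_add 1
  have h2 := h1.div (h0.pow k) (by simp)
  simp only [one_pow, div_one] at h2
  refine h2.congr' ?_
  filter_upwards [eventually_ge_atTop k, h0.eventually_ne one_ne_zero] with n hn hne
  simp only [Pi.div_apply]
  rw [div_eq_iff (pow_ne_zero _ hne), ← pow_add]; congr 1; omega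

lemma pow_diff {a b : ℝ} (ha : 0 ≤ a) (hab : a ≤ b) (m : ℕ) :
    (m + 1) * (b - a) * a ^ m ≤ b ^ (m+1) - a ^ (m+1) ∧ b ^ (m+1) - a ^ (m+1) ≤ (m + 1) * (b - a) * b ^ m := by
  induction m with
  | zero => simp
  | succ m ih =>
    have e : b ^ (m+1+1) - a ^ (m+1+1) = b * (b ^ (m+1) - a ^ (m+1)) + a ^ (m+1) * (b - a) := by ring
    have hp := pow_le_pow_left₀ ha hab (m+1)
    have hb : 0 ≤ b := ha.trans hab
    have hs : 0 ≤ b - a := by linarith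
    push_cast
    rw [e]
    constructor
    · have h1 := mul_le_mul_of_nonneg_left ih.1 hb
      have h2 : a * ((m + 1) * (b - a) * a ^ m) ≤ b * ((m + 1) * (b - a) * a ^ m) :=
        mul_le_mul_of_nonneg_right hab (by positivity)
      have h3 : ((m:ℝ) + 1 + 1) * (b - a) * a ^ (m + 1) = a * ((m + 1) * (b - a) * a ^ m) + a ^ (m+1) * (b - a) := by ring
      linarith
    · have h1 := mul_le_mul_of_nonneg_left ih.2 hb
      have h2 := mul_le_mul_of_nonneg_right hp hs
      have h3 : ((m:ℝ) + 1 + 1) * (b - a) * b ^ (m + 1) = b * ((m + 1) * (b - a) * b ^ m) + b ^ (m+1) * (b - a) := by ring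
      linarith

lemma diff_lim (φ : ℝ) : Tendsto (fun n : ℕ => (n:ℝ) * ((1 - 2 * φ / n) ^ (n - 2) - (1 - φ / n) ^ (2 * (n - 1))))
    atTop (𝓝 ((2 * φ - φ ^ 2) * Real.exp (-(2 * φ)))) := by
  have hb : Tendsto (fun n : ℕ => (1 - 2 * φ / n) ^ (n - 2)) atTop (𝓝 (Real.exp (-(2 * φ)))) := by
    refine (pow_lim (-(2 * φ)) 2).congr fun n => ?_
    rw [neg_div, ← sub_eq_add_neg]
  have hc : Tendsto (fun n : ℕ => ((1 - φ / n) ^ 2) ^ (n - 2)) atTop (𝓝 (Real.exp (-(2 * φ)))) := by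
    have := (pow_lim (-φ) 2).pow 2
    rw [← Real.exp_nat_mul, show ((2:ℕ):ℝ) * -φ = -(2 * φ) by push_cast; ring] at this
    refine this.congr fun n => ?_
    rw [neg_div, ← sub_eq_add_neg, ← pow_mul, ← pow_mul, mul_comm]
  have hr : Tendsto (fun n : ℕ => ((n:ℝ) - 1) / n * φ ^ 2) atTop (𝓝 (φ ^ 2)) := by
    have : Tendsto (fun n : ℕ => (1 - 1 / (n:ℝ)) * φ ^ 2) atTop (𝓝 ((1 - 0) * φ ^ 2)) :=
      (tendsto_const_nhds.sub tendsto_one_div_atTop_nhds_zero_nat).mul_const _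
    rw [sub_zero, one_mul] at this
    refine this.congr' ?_
    filter_upwards [eventually_gt_atTop 0] with n hn
    have : (n:ℝ) ≠ 0 := by positivity
    field_simp
  have hsec : Tendsto (fun n : ℕ => (n:ℝ) * (((1 - φ / n) ^ 2) ^ (n - 1) - (1 - 2 * φ / n) ^ (n - 1)))
      atTop (𝓝 (φ ^ 2 * Real.exp (-(2 * φ)))) := by
    have hev : ∀ᶠ n : ℕ in atTop, 2 ≤ n ∧ 2 * φ ≤ n :=
      (eventually_ge_atTop 2).and (tendsto_natCast_atTop_atTop.eventually_ge_atTop (2 * φ))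
    have key : ∀ n : ℕ, 2 ≤ n → 2 * φ ≤ n →
        ((n:ℝ) - 1) / n * φ ^ 2 * (1 - 2 * φ / n) ^ (n - 2) ≤
          (n:ℝ) * (((1 - φ / n) ^ 2) ^ (n - 1) - (1 - 2 * φ / n) ^ (n - 1)) ∧
        (n:ℝ) * (((1 - φ / n) ^ 2) ^ (n - 1) - (1 - 2 * φ / n) ^ (n - 1)) ≤
          ((n:ℝ) - 1) / n * φ ^ 2 * ((1 - φ / n) ^ 2) ^ (n - 2) := by
      intro n hn h2
      obtain ⟨m, rfl⟩ : ∃ m, n = m + 2 := ⟨n - 2, by omega⟩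
      have hn0 : (0:ℝ) < (m + 2 : ℕ) := by positivity
      have ha : 0 ≤ 1 - 2 * φ / ((m + 2 : ℕ):ℝ) := by
        rw [sub_nonneg, div_le_one hn0]; exact h2
      have e : (1 - φ / ((m + 2 : ℕ):ℝ)) ^ 2 - (1 - 2 * φ / ((m + 2 : ℕ):ℝ)) = φ ^ 2 / ((m + 2 : ℕ):ℝ) ^ 2 := by
        field_simp; ring
      have hab : 1 - 2 * φ / ((m + 2 : ℕ):ℝ) ≤ (1 - φ / ((m + 2 : ℕ):ℝ)) ^ 2 := by
        have : 0 ≤ φ ^ 2 / ((m + 2 : ℕ):ℝ) ^ 2 := by positivity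
        linarith
      obtain ⟨p1, p2⟩ := pow_diff ha hab m
      rw [e] at p1 p2
      have q1 := mul_le_mul_of_nonneg_left p1 hn0.le
      have q2 := mul_le_mul_of_nonneg_left p2 hn0.le
      have r : ∀ z : ℝ, ((m + 2 : ℕ):ℝ) * ((m + 1) * (φ ^ 2 / ((m + 2 : ℕ):ℝ) ^ 2) * z) =
          (((m + 2 : ℕ):ℝ) - 1) / ((m + 2 : ℕ):ℝ) * φ ^ 2 * z := by
        intro z
        field_simp; push_cast; ring
      rw [r] at q1 q2
      exact ⟨q1, q2⟩
    refine tendsto_of_tendsto_of_tendsto_of_le_of_le' (hr.mul hb) (hr.mul hc) ?_ ?_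
    · filter_upwards [hev] with n h using (key n h.1 h.2).1
    · filter_upwards [hev] with n h using (key n h.1 h.2).2
  have := (hb.const_mul (2 * φ)).sub hsec
  rw [← sub_mul] at this
  refine this.congr' ?_
  filter_upwards [eventually_ge_atTop 2] with n hn
  obtain ⟨m, rfl⟩ : ∃ m, n = m + 2 := ⟨n - 2, by omega⟩
  have hn0 : ((m + 2 : ℕ):ℝ) ≠ 0 := by positivity
  rw [pow_mul]
  simp only [show m + 2 - 2 = m by omega, show m + 2 - 1 = m + 1 by omega]
  generalize ((1 - φ / ((m + 2 : ℕ):ℝ)) ^ 2) ^ (m + 1) = B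
  have : (1 - 2 * φ / ((m + 2 : ℕ):ℝ)) ^ (m+1) = (1 - 2 * φ / ((m + 2 : ℕ):ℝ)) ^ m - (1 - 2 * φ / ((m + 2 : ℕ):ℝ)) ^ m * (2 * φ / ((m + 2 : ℕ):ℝ)) := by ring
  rw [this]
  generalize (1 - 2 * φ / ((m + 2 : ℕ):ℝ)) ^ m = A
  field_simp
  ring

lemma var_lim (φ c A : ℝ) (An : ℕ → ℝ) (hA : Tendsto An atTop (𝓝 A)) :
    Tendsto (fun n : ℕ => (n * (1 - φ / n)^(n-1) + n * (n - 1) * ((n:ℝ)⁻¹ * An n +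
      (1 - c / n) * (1 - 2 * (φ / n)) ^ (n - 2)) - (n * (1 - φ / n)^(n-1))^2) / n) atTop
      (𝓝 (Real.exp (-φ) + A - (1 + c) * Real.exp (-(2 * φ)) + (2 * φ - φ ^ 2) * Real.exp (-(2 * φ)))) := by
  have ha : Tendsto (fun n : ℕ => (1 - φ / n) ^ (n - 1)) atTop (𝓝 (Real.exp (-φ))) := by
    refine (pow_lim (-φ) 1).congr fun n => ?_
    rw [neg_div, ← sub_eq_add_neg]
  have hb : Tendsto (fun n : ℕ => (1 - 2 * φ / n) ^ (n - 2)) atTop (𝓝 (Real.exp (-(2 * φ)))) := by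
    refine (pow_lim (-(2 * φ)) 2).congr fun n => ?_
    rw [neg_div, ← sub_eq_add_neg]
  have h1 : Tendsto (fun n : ℕ => 1 - 1 / (n:ℝ)) atTop (𝓝 (1 - 0)) :=
      (tendsto_const_nhds.sub tendsto_one_div_atTop_nhds_zero_nat)
  have h2 : Tendsto (fun n : ℕ => 1 + c - c / (n:ℝ)) atTop (𝓝 (1 + c - 0)) :=
      (tendsto_const_nhds.sub (tendsto_const_div_atTop_nhds_zero_nat c))
  have := ((ha.add (h1.mul hA)).sub (h2.mul hb)).add (diff_lim φ)
  rw [sub_zero, sub_zero, one_mul] at this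
  refine this.congr' ?_
  filter_upwards [eventually_ge_atTop 2] with n hn
  have hn0 : (n:ℝ) ≠ 0 := by positivity
  rw [mul_pow, ← pow_mul, mul_comm (n - 1) 2, mul_div_assoc]
  generalize (1 - φ / (n:ℝ)) ^ (2 * (n-1)) = x
  generalize (1 - φ / (n:ℝ)) ^ (n-1) = y
  generalize (1 - 2 * φ / (n:ℝ)) ^ (n-2) = z
  field_simp
  ring

end Lim

section Ring
variable {d : ℕ}

def Wv (d : ℕ) (ρ : ℝ) (x : EuclideanSpace ℝ (Fin d)) : ℝ := volume.real (closedBall 0 ρ ∪ closedBall x ρ)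

lemma cb_vol (r : ℝ) (hr : 0 ≤ r) (x : EuclideanSpace ℝ (Fin d)) :
    volume.real (closedBall x r) = unitBallVol d * r ^ d := by
  rw [measureReal_def, Measure.addHaar_closedBall _ _ hr, ENNReal.toReal_mul, ENNReal.toReal_ofReal (by positivity),
    finrank_euclideanSpace_fin, unitBallVol, Measure.addHaar_unitClosedBall_eq_addHaar_unitBall, mul_comm]

lemma Wv_meas (ρ : ℝ) : Measurable (Wv d ρ) := by
  unfold Wv
  have hs : MeasurableSet {p : EuclideanSpace ℝ (Fin d) × EuclideanSpace ℝ (Fin d) | dist p.2 0 ≤ ρ ∨ dist p.2 p.1 ≤ ρ} := by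
    refine MeasurableSet.union ?_ ?_
    · exact measurableSet_le (measurable_snd.dist measurable_const) measurable_const
    · exact measurableSet_le (measurable_snd.dist measurable_fst) measurable_const
  exact (measurable_measure_prodMk_left (ν := (volume : Measure (EuclideanSpace ℝ (Fin d)))) hs).ennreal_toReal

lemma Wv_le {ρ : ℝ} (hρ : 0 ≤ ρ) (x : EuclideanSpace ℝ (Fin d)) : Wv d ρ x ≤ 2 * phi d ρ := by
  unfold Wv phi
  refine (measureReal_union_le _ _).trans ?_
  rw [cb_vol _ hρ, cb_vol _ hρ]; linarith

lemma ring_lim {ρ : ℝ} (hρ : 0 < ρ) : Tendsto (fun n : ℕ =>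
    ∫ x in closedBall (0 : EuclideanSpace ℝ (Fin d)) (2 * ρ) \ closedBall 0 ρ, (1 - Wv d ρ x / n) ^ (n - 2)) atTop
    (𝓝 (∫ x in closedBall (0 : EuclideanSpace ℝ (Fin d)) (2 * ρ) \ closedBall 0 ρ, Real.exp (- Wv d ρ x))) := by
  have fin : volume (closedBall (0 : EuclideanSpace ℝ (Fin d)) (2 * ρ) \ closedBall 0 ρ) ≠ ⊤ :=
    ((measure_mono diff_subset).trans_lt measure_closedBall_lt_top).ne
  refine tendsto_integral_filter_of_dominated_convergence (fun _ => (1:ℝ)) ?_ ?_ ?_ ?_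
  · refine Eventually.of_forall fun n => ?_
    exact ((measurable_const.sub ((Wv_meas ρ).div_const _)).pow_const _).aestronglyMeasurable
  · filter_upwards [tendsto_natCast_atTop_atTop.eventually_ge_atTop (2 * phi d ρ), eventually_gt_atTop 0] with n hn h0
    refine Eventually.of_forall fun x => ?_
    have hn0 : (0:ℝ) < n := by exact_mod_cast h0
    have w0 : 0 ≤ Wv d ρ x := measureReal_nonneg
    have w1 := Wv_le hρ.le x
    have a1 : Wv d ρ x / n ≤ 1 := by rw [div_le_one hn0]; linarith
    have a0 : 0 ≤ Wv d ρ x / n := by positivity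
    rw [Real.norm_eq_abs, abs_of_nonneg (pow_nonneg (by linarith) _)]
    exact pow_le_one₀ (by linarith) (by linarith)
  · exact integrableOn_const fin
  · refine Eventually.of_forall fun x => ?_
    refine (pow_lim (- Wv d ρ x) 2).congr fun n => ?_
    rw [neg_div, ← sub_eq_add_neg]

lemma unitVec_norm (hd : 1 ≤ d) : ‖unitVec d‖ = 1 := by
  unfold unitVec
  rw [dif_pos (by omega)]
  simp

lemma Wv_rot {ρ : ℝ} {x y : EuclideanSpace ℝ (Fin d)} (h : ‖x‖ = ‖y‖) : Wv d ρ x = Wv d ρ y := by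
  let f := (ℝ ∙ (x - y))ᗮ.reflection
  have hf : f x = y := Submodule.reflection_sub h
  have := f.measurePreserving.measureReal_preimage (s := closedBall 0 ρ ∪ closedBall y ρ)
    (measurableSet_closedBall.union measurableSet_closedBall).nullMeasurableSet
  unfold Wv
  rw [← this, preimage_union]
  congr 2
  · ext z; simp
  · ext z
    simp only [mem_closedBall, mem_preimage]
    rw [← hf, f.dist_map]

lemma Wv_omega (hd : 1 ≤ d) {ρ : ℝ} (hρ : 0 < ρ) (x : EuclideanSpace ℝ (Fin d)) :
    Wv d ρ x = ρ ^ d * omegaVol d (‖x‖ / ρ) := by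
  have h1 : Wv d ρ x = Wv d ρ (‖x‖ • unitVec d) := Wv_rot (by rw [norm_smul, unitVec_norm hd]; simp)
  rw [h1]
  unfold Wv omegaVol
  have e : closedBall (0 : EuclideanSpace ℝ (Fin d)) ρ ∪ closedBall (‖x‖ • unitVec d) ρ =
      (fun z => ρ • z) '' (closedBall 0 1 ∪ closedBall ((‖x‖ / ρ) • unitVec d) 1) := by
    rw [image_union, image_smul, image_smul, _root_.smul_closedBall _ _ zero_le_one, _root_.smul_closedBall _ _ zero_le_one, smul_zero, smul_smul,
      Real.norm_eq_abs, abs_of_pos hρ, mul_one, mul_div_cancel₀ _ hρ.ne']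
  rw [e, image_smul, measureReal_def, Measure.addHaar_smul, ENNReal.toReal_mul, finrank_euclideanSpace_fin,
    ENNReal.toReal_ofReal (by positivity), abs_of_nonneg (by positivity)]

lemma omega_meas (d : ℕ) : Measurable (omegaVol d) := by
  have : omegaVol d = fun r => Wv d 1 (r • unitVec d) := rfl
  rw [this]
  exact (Wv_meas 1).comp (by fun_prop)

lemma omega_ii (d : ℕ) {ρ : ℝ} (hρ : 0 < ρ) (a b : ℝ) :
    IntervalIntegrable (fun t => Real.exp (-(ρ ^ d * omegaVol d t)) * t ^ (d - 1)) volume a b := by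
  have h : IntervalIntegrable (fun t : ℝ => t ^ (d - 1)) volume a b := (by fun_prop : Continuous fun t : ℝ => t ^ (d-1)).intervalIntegrable _ _
  refine h.mono_fun ?_ ?_
  · exact ((((omega_meas d).const_mul _).neg.exp).mul (measurable_id.pow_const _)).aestronglyMeasurable
  · refine Eventually.of_forall fun t => ?_
    simp only [norm_mul]
    have : ‖Real.exp (-(ρ ^ d * omegaVol d t))‖ ≤ 1 := by
      rw [Real.norm_eq_abs, Real.abs_exp, Real.exp_le_one_iff]
      have : 0 ≤ omegaVol d t := ENNReal.toReal_nonneg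
      have : 0 ≤ ρ ^ d * omegaVol d t := by positivity
      linarith
    exact mul_le_of_le_one_left (norm_nonneg _) this

lemma ring_J (hd : 1 ≤ d) {ρ : ℝ} (hρ : 0 < ρ) :
    ∫ x in closedBall (0 : EuclideanSpace ℝ (Fin d)) (2 * ρ) \ closedBall 0 ρ, Real.exp (- Wv d ρ x) =
    ρ ^ d * (Jint 2 d ρ - Jint 1 d ρ) := by
  haveI : Nonempty (Fin d) := ⟨⟨0, hd⟩⟩
  set F : ℝ → ℝ := (Ioc ρ (2 * ρ)).indicator fun t => Real.exp (-(ρ ^ d * omegaVol d (t / ρ))) with hF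
  have e1 : ∫ x in closedBall (0 : EuclideanSpace ℝ (Fin d)) (2 * ρ) \ closedBall 0 ρ, Real.exp (- Wv d ρ x) =
      ∫ x : EuclideanSpace ℝ (Fin d), F ‖x‖ := by
    rw [← integral_indicator (measurableSet_closedBall.diff measurableSet_closedBall)]
    refine integral_congr_ae (Eventually.of_forall fun x => ?_)
    simp only [hF, Set.indicator_apply]
    have : (x ∈ closedBall (0 : EuclideanSpace ℝ (Fin d)) (2 * ρ) \ closedBall 0 ρ) ↔ ‖x‖ ∈ Ioc ρ (2 * ρ) := by
      simp; tauto
    simp only [this, Wv_omega hd hρ]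
  rw [e1, integral_fun_norm_addHaar, finrank_euclideanSpace_fin]
  have e2 : volume.real (ball (0 : EuclideanSpace ℝ (Fin d)) 1) = unitBallVol d := by
    rw [unitBallVol, Measure.addHaar_unitClosedBall_eq_addHaar_unitBall]; rfl
  rw [e2]
  have e3 : ∫ y in Ioi (0:ℝ), y ^ (d - 1) • F y = ρ ^ d * ∫ s in (1:ℝ)..2, Real.exp (-(ρ ^ d * omegaVol d s)) * s ^ (d - 1) := by
    have : ∀ y : ℝ, y ^ (d - 1) • F y = (Ioc ρ (2 * ρ)).indicator (fun t => t ^ (d-1) * Real.exp (-(ρ ^ d * omegaVol d (t / ρ)))) y := by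
      intro y; simp only [hF, Set.indicator_apply]; split_ifs <;> simp
    simp only [this]
    rw [setIntegral_indicator measurableSet_Ioc, (inter_eq_right.2 (fun y hy => hρ.trans hy.1) : Ioi 0 ∩ Ioc ρ (2 * ρ) = Ioc ρ (2 * ρ)),
      ← intervalIntegral.integral_of_le (by linarith)]
    have h := intervalIntegral.integral_comp_div (a := ρ) (b := 2 * ρ)
      (fun s => Real.exp (-(ρ ^ d * omegaVol d s)) * s ^ (d - 1)) hρ.ne'
    rw [div_self hρ.ne', mul_div_cancel_right₀ _ hρ.ne', smul_eq_mul] at h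
    have hd' : ρ ^ d = ρ ^ (d - 1) * ρ := by rw [← pow_succ]; congr 1; omega
    rw [show ρ ^ d * ∫ s in (1:ℝ)..2, Real.exp (-(ρ ^ d * omegaVol d s)) * s ^ (d - 1) =
      ρ ^ (d-1) * (ρ * ∫ s in (1:ℝ)..2, Real.exp (-(ρ ^ d * omegaVol d s)) * s ^ (d - 1)) by
        rw [← mul_assoc, ← hd'], ← h, ← intervalIntegral.integral_const_mul]
    refine intervalIntegral.integral_congr fun t _ => ?_
    simp only [div_pow]
    field_simp
  rw [e3]
  unfold Jint
  rw [← mul_sub, intervalIntegral.integral_interval_sub_left (omega_ii d hρ _ _) (omega_ii d hρ _ _)]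
  simp only [nsmul_eq_mul, smul_eq_mul]
  ring

end Ring

section Final

lemma isoS_int {G : Type*} {n : ℕ} (R : G → G → Prop) (X : Fin n → G) : ∃ k : ℤ, isoS R X = k := by
  refine ⟨∑ k, if Iso R k X then 1 else 0, ?_⟩
  unfold isoS isoI
  push_cast
  rfl

lemma gcdf_mem (t : ℝ) : 0 ≤ stdGaussCDF t ∧ stdGaussCDF t ≤ 1 := by
  refine ⟨ENNReal.toReal_nonneg, ?_⟩
  exact measureReal_le_one (μ := gaussianReal 0 1)

lemma kol_lower {Ω : Type*} [MeasurableSpace Ω] (P : Measure Ω) [IsProbabilityMeasure P] (S : Ω → ℝ)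
    (hS : ∀ ω, ∃ k : ℤ, S ω = k) (m σ : ℝ) (hσ : 0 < σ) :
    σ⁻¹ * ((√(2 * Real.pi))⁻¹ * gw σ⁻¹) ≤ 2 * ⨆ t : ℝ, |P.real {ω | (S ω - m) / σ ≤ t} - stdGaussCDF t| := by
  have bdd : BddAbove (range fun t : ℝ => |P.real {ω | (S ω - m) / σ ≤ t} - stdGaussCDF t|) := by
    refine ⟨1, ?_⟩
    rintro _ ⟨t, rfl⟩
    have h1 := gcdf_mem t
    have h2 : P.real {ω | (S ω - m) / σ ≤ t} ≤ 1 := measureReal_le_one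
    have h3 : 0 ≤ P.real {ω | (S ω - m) / σ ≤ t} := measureReal_nonneg
    simp only [abs_le]; constructor <;> linarith
  set D := ⨆ t : ℝ, |P.real {ω | (S ω - m) / σ ≤ t} - stdGaussCDF t| with hD
  have hDt : ∀ t, |P.real {ω | (S ω - m) / σ ≤ t} - stdGaussCDF t| ≤ D := fun t => le_ciSup bdd t
  have D0 : 0 ≤ D := (abs_nonneg _).trans (hDt 0)
  set c := (√(2 * Real.pi))⁻¹ * gw σ⁻¹ with hc
  have c0 : 0 < c := by
    have : 0 < √(2 * Real.pi) := Real.sqrt_pos.2 (by positivity)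
    have : 0 < gw σ⁻¹ := Real.exp_pos _
    positivity
  have hσi : 0 < σ⁻¹ := inv_pos.2 hσ
  have f1 := Int.floor_le m
  have f2 := Int.lt_floor_add_one m
  have key : ∀ δ, 0 < δ → δ ≤ σ⁻¹ → (σ⁻¹ - δ) * c ≤ 2 * D := by
    intro δ hδ hδ2
    set a := ((⌊m⌋ : ℝ) - m) / σ with ha
    have a0 : a ≤ 0 := div_nonpos_of_nonpos_of_nonneg (by linarith) hσ.le
    have a1 : -σ⁻¹ ≤ a := by
      rw [ha, div_eq_mul_inv, ← neg_one_mul]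
      exact mul_le_mul_of_nonneg_right (by linarith) hσi.le
    have gl := gcdf_lower (a := a) (b := a + σ⁻¹ - δ) (s := σ⁻¹) (by linarith) a1 (by linarith)
    have eF : {ω | (S ω - m) / σ ≤ a + σ⁻¹ - δ} = {ω | (S ω - m) / σ ≤ a} := by
      ext ω
      simp only [mem_setOf_eq]
      constructor
      · intro h
        have h' : (S ω - m) / σ < a + σ⁻¹ := by linarith
        obtain ⟨k, hk⟩ := hS ω
        rw [ha, hk, ← one_div, ← add_div, div_lt_div_iff_of_pos_right hσ] at h'
        have h3 : (k:ℝ) < ((⌊m⌋ + 1 : ℤ) : ℝ) := by push_cast; linarith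
        have h4 : k < ⌊m⌋ + 1 := by exact_mod_cast h3
        have h5 : (k:ℝ) ≤ (⌊m⌋ : ℝ) := by exact_mod_cast Int.lt_add_one_iff.1 h4
        rw [ha, hk, div_le_div_iff_of_pos_right hσ]; linarith
      · intro h; linarith
    have d1 := hDt a
    have d2 := hDt (a + σ⁻¹ - δ)
    rw [eF] at d2
    rw [abs_le] at d1 d2
    have : (a + σ⁻¹ - δ - a) * c = (σ⁻¹ - δ) * c := by ring
    rw [← hc, this] at gl
    linarith [d1.1, d1.2, d2.1, d2.2]
  by_contra hcon
  push Not at hcon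
  have hδ : 0 < (σ⁻¹ * c - 2 * D) / (2 * c) := div_pos (by linarith) (by linarith)
  have := key _ hδ (by
    rw [div_le_iff₀ (by linarith)]
    nlinarith)
  have e : (σ⁻¹ - (σ⁻¹ * c - 2 * D) / (2 * c)) * c = (σ⁻¹ * c + 2 * D) / 2 := by
    field_simp; ring
  rw [e] at this
  linarith

def vf (d : ℕ) (ρ : ℝ) (n : ℕ) : ℝ :=
  n * (1 - phi d ρ / n)^(n-1) + n * (n - 1) * ((n:ℝ)⁻¹ *
    (∫ x in closedBall (0 : EuclideanSpace ℝ (Fin d)) (2 * ρ) \ closedBall 0 ρ, (1 - Wv d ρ x / n) ^ (n - 2)) +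
      (1 - (2 ^ d * phi d ρ) / n) * (1 - 2 * (phi d ρ / n)) ^ (n - 2)) - (n * (1 - phi d ρ / n)^(n-1))^2

lemma vf_lim {d : ℕ} (hd : 1 ≤ d) {ρ : ℝ} (hρ : 0 < ρ) :
    Tendsto (fun n : ℕ => vf d ρ n / n) atTop (𝓝 (gS d ρ)) := by
  have h := var_lim (phi d ρ) (2 ^ d * phi d ρ) _ _ (ring_lim (d := d) hρ)
  rw [ring_J hd hρ] at h
  have e : Real.exp (-phi d ρ) + ρ ^ d * (Jint 2 d ρ - Jint 1 d ρ) - (1 + 2 ^ d * phi d ρ) * Real.exp (-(2 * phi d ρ)) +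
      (2 * phi d ρ - phi d ρ ^ 2) * Real.exp (-(2 * phi d ρ)) = gS d ρ := by
    unfold gS; ring
  rw [e] at h
  exact h

def upB (d : ℕ) (ρ : ℝ) (n : ℕ) : ℝ :=
  2 * (2 * √(((1+((5 ^ d : ℕ):ℝ))^4 * (1 + 4 * (8 * (2 ^ d * phi d ρ) + (8 * (2 ^ d * phi d ρ))^2))) * n) / vf d ρ n +
        13/2 * (n * ((1+((5 ^ d : ℕ):ℝ)) / √(vf d ρ n)) ^ 3) + (1+((5 ^ d : ℕ):ℝ)) / √(vf d ρ n))

lemma kol_bounds {d : ℕ} (hd : 1 ≤ d) {ρ : ℝ} (hρ : 0 < ρ) {n : ℕ} (hn : 2 ≤ n) (h6 : 6 * ρ < sideLen d n)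
    (hv : 0 < vf d ρ n) :
    (√(vf d ρ n))⁻¹ * ((√(2 * Real.pi))⁻¹ * gw (√(vf d ρ n))⁻¹) ≤ 2 * kolDist (binppLaw d n) (isolCount d n ρ) ∧
    kolDist (binppLaw d n) (isolCount d n ρ) ≤ upB d ρ n := by
  haveI : Fact (0 < sideLen d n) := ⟨sideLen_pos d (by omega)⟩
  have hn0 : (n:ℝ) ≠ 0 := by positivity
  have hL := sideLen_pow hd n
  have φ0 : 0 ≤ phi d ρ := by
    unfold phi unitBallVol; positivity
  have v1 : (muT d (sideLen d n)).real (KT d (sideLen d n) ρ) = phi d ρ / n := by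
    rw [vol_KT _ (by linarith), cb_vol _ hρ.le, hL]; rfl
  have v2 : (muT d (sideLen d n)).real (KT d (sideLen d n) (2 * ρ)) = (2 ^ d * phi d ρ) / n := by
    rw [vol_KT _ (by linarith), cb_vol _ (by linarith), hL, phi, mul_pow]; congr 1; ring
  have sK : ∀ r, ∀ a ∈ KT d (sideLen d n) r, -a ∈ KT d (sideLen d n) r := fun r a ha => by
    simp only [KT, mem_setOf_eq, Nd_neg] at ha ⊢; exact ha
  have hsub : ∀ a b, a ∈ KT d (sideLen d n) ρ → b ∈ KT d (sideLen d n) ρ → a - b ∈ KT d (sideLen d n) (2 * ρ) := by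
    intro a b ha hb
    simp only [KT, mem_setOf_eq] at ha hb ⊢
    have := Nd_sub (sideLen d n) a b
    linarith
  have hKK : KT d (sideLen d n) ρ ⊆ KT d (sideLen d n) (2 * ρ) := fun a ha => by
    simp only [KT, mem_setOf_eq] at ha ⊢; linarith
  have hvar := var_iso (n := n) (muT d (sideLen d n)) (KT_meas (sideLen d n) ρ) (sK ρ) (KT_meas (sideLen d n) (2 * ρ)) hKK hsub
  rw [int_ring (sideLen d n) hρ h6 (n - 2), v1, v2, hL] at hvar
  replace hvar := hvar.trans (show _ = vf d ρ n from rfl)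
  have hσ : 0 < √(vf d ρ n) := Real.sqrt_pos.2 hv
  have hsq : √(vf d ρ n) ^ 2 = vf d ρ n := Real.sq_sqrt hv.le
  rw [kol_eq hd hρ, hvar]
  haveI : IsProbabilityMeasure (pw n (muT d (sideLen d n))) := by unfold pw; infer_instance
  refine ⟨kol_lower _ _ (isoS_int _) _ _ hσ, ciSup_le fun t => ?_⟩
  have := BE_iso (n := n) (muT d (sideLen d n)) (by omega) (meas_RK (KT_meas (sideLen d n) ρ))
    (meas_RK (KT_meas (sideLen d n) (2 * ρ)))
    (fun a b h => by have := sK ρ _ h; rwa [neg_sub] at this)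
    (fun a => by simp only [RK, sub_self, KT, mem_setOf_eq, Nd_zero]; exact hρ.le)
    (fun a b c h1 h2 => by
      have := hsub _ _ h1 (sK ρ _ h2)
      have e : a - b - -(b - c) = a - c := by abel
      rwa [e] at this)
    (pack_torus (sideLen_pos d (by omega)) hρ) ((2 ^ d * phi d ρ) / n) (by positivity)
    (fun a => by
      rw [← v2, ← real_shift (muT d (sideLen d n)) _ (KT_meas (sideLen d n) (2 * ρ)) a]
      apply le_of_eq; congr 1; ext b
      simp only [RK, mem_setOf_eq]
      constructor <;> intro h <;> simpa using sK _ _ h)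
    (√(vf d ρ n)) hσ (hvar.trans hsq.symm) t
  refine this.trans (le_of_eq ?_)
  unfold upB
  rw [hsq]
  have e1 : (n:ℝ) * (8 * (2 ^ d * phi d ρ / n)) = 8 * (2 ^ d * phi d ρ) := by field_simp
  have e2 : (n:ℝ) ^ 2 * (8 * (2 ^ d * phi d ρ / n)) ^ 2 = (8 * (2 ^ d * phi d ρ)) ^ 2 := by rw [← e1]; ring
  rw [e1, e2]

lemma side_ev {d : ℕ} (hd : 1 ≤ d) (c : ℝ) : ∀ᶠ n : ℕ in atTop, c < sideLen d n := by
  have : Tendsto (fun n : ℕ => sideLen d n) atTop atTop := by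
    unfold sideLen
    have hd' : (0:ℝ) < d := by exact_mod_cast hd
    exact (tendsto_rpow_atTop (inv_pos.2 hd')).comp tendsto_natCast_atTop_atTop
  exact this.eventually_gt_atTop c

lemma ratio_lim {d : ℕ} (hd : 1 ≤ d) {ρ : ℝ} (hρ : 0 < ρ) (hg : 0 < gS d ρ) :
    Tendsto (fun n : ℕ => √n / √(vf d ρ n)) atTop (𝓝 (√(gS d ρ))⁻¹) := by
  have := ((vf_lim hd hρ).sqrt).inv₀ (Real.sqrt_pos.2 hg).ne'
  refine this.congr fun n => ?_
  rw [Real.sqrt_div' _ (Nat.cast_nonneg n), inv_div]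

lemma vf_ev {d : ℕ} (hd : 1 ≤ d) {ρ : ℝ} (hρ : 0 < ρ) (hg : 0 < gS d ρ) :
    ∀ᶠ n : ℕ in atTop, 0 < vf d ρ n := by
  filter_upwards [(vf_lim hd hρ).eventually_const_lt hg, eventually_gt_atTop 0] with n h h0
  have : (0:ℝ) < n := by exact_mod_cast h0
  exact (div_pos_iff_of_pos_right this).1 h

lemma inv_sqrt_lim : Tendsto (fun n : ℕ => (√(n:ℝ))⁻¹) atTop (𝓝 0) :=
  (Real.tendsto_sqrt_atTop.comp tendsto_natCast_atTop_atTop).inv_tendsto_atTop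

lemma low_lim {d : ℕ} (hd : 1 ≤ d) {ρ : ℝ} (hρ : 0 < ρ) (hg : 0 < gS d ρ) :
    Tendsto (fun n : ℕ => √n * ((√(vf d ρ n))⁻¹ * ((√(2 * Real.pi))⁻¹ * gw (√(vf d ρ n))⁻¹) / 2)) atTop
      (𝓝 ((8 * Real.pi * gS d ρ) ^ (-(1 : ℝ) / 2))) := by
  have r := ratio_lim hd hρ hg
  have z : Tendsto (fun n : ℕ => (√(vf d ρ n))⁻¹) atTop (𝓝 0) := by
    have := r.mul inv_sqrt_lim
    rw [mul_zero] at this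
    refine this.congr' ?_
    filter_upwards [eventually_gt_atTop 0] with n h0
    have : 0 < √(n:ℝ) := Real.sqrt_pos.2 (by exact_mod_cast h0)
    field_simp
  have g : Tendsto (fun n : ℕ => gw (√(vf d ρ n))⁻¹) atTop (𝓝 1) := by
    have c : Continuous gw := by unfold gw; fun_prop
    have := (c.tendsto 0).comp z
    rwa [show gw 0 = 1 by simp [gw]] at this
  have := r.mul ((g.const_mul (√(2 * Real.pi))⁻¹).div_const 2)
  have e : (√(gS d ρ))⁻¹ * ((√(2 * Real.pi))⁻¹ * 1 / 2) = (8 * Real.pi * gS d ρ) ^ (-(1 : ℝ) / 2) := by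
    have pp := Real.pi_pos
    rw [neg_div, Real.rpow_neg (by positivity), ← Real.sqrt_eq_rpow,
      show 8 * Real.pi * gS d ρ = (2 * Real.pi) * gS d ρ * 2 ^ 2 by ring, Real.sqrt_mul (by positivity) (2 ^ 2),
      Real.sqrt_mul (by positivity) (gS d ρ), Real.sqrt_sq (by norm_num)]
    rw [mul_inv, mul_inv]; ring
  rw [e] at this
  refine this.congr fun n => ?_
  ring

lemma up_lim {d : ℕ} (hd : 1 ≤ d) {ρ : ℝ} (hρ : 0 < ρ) (hg : 0 < gS d ρ) :
    ∃ c, Tendsto (fun n : ℕ => √n * upB d ρ n) atTop (𝓝 c) := by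
  have r := ratio_lim hd hρ hg
  set A := (1+((5 ^ d : ℕ):ℝ))^4 * (1 + 4 * (8 * (2 ^ d * phi d ρ) + (8 * (2 ^ d * phi d ρ))^2))
  set B := (1+((5 ^ d : ℕ):ℝ))
  have t := ((((r.pow 2).const_mul (2 * √A)).add ((r.pow 3).const_mul (13/2 * B ^ 3))).add (r.const_mul B)).const_mul 2
  refine ⟨_, t.congr' ?_⟩
  filter_upwards [vf_ev hd hρ hg] with n hv
  unfold upB
  change _ = √(n:ℝ) * (2 * (2 * √(A * n) / vf d ρ n + 13/2 * (n * (B / √(vf d ρ n)) ^ 3) + B / √(vf d ρ n)))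
  have hs : 0 < √(vf d ρ n) := Real.sqrt_pos.2 hv
  have e1 : vf d ρ n = √(vf d ρ n) ^ 2 := (Real.sq_sqrt hv.le).symm
  have e2 : (n:ℝ) = √(n:ℝ) ^ 2 := (Real.sq_sqrt (Nat.cast_nonneg n)).symm
  rw [Real.sqrt_mul' _ (Nat.cast_nonneg n)]
  generalize √(n:ℝ) = s at *
  rw [e2]
  generalize √(vf d ρ n) = w at *
  rw [e1]
  field_simp

lemma kol_nonneg {Ω : Type*} [MeasurableSpace Ω] (P : Measure Ω) (X : Ω → ℝ) : 0 ≤ kolDist P X :=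
  Real.iSup_nonneg fun _ => abs_nonneg _

lemma main_aux (d : ℕ) (hd : 1 ≤ d) (ρ : ℝ) (hρ : 0 < ρ) :
    (8 * Real.pi * gS d ρ) ^ (-(1 : ℝ) / 2) ≤
      liminf (fun n : ℕ => Real.sqrt n * kolDist (binppLaw d n) (isolCount d n ρ)) atTop := by
  rcases le_or_gt (gS d ρ) 0 with hg | hg
  · have : (8 * Real.pi * gS d ρ) ^ (-(1 : ℝ) / 2) = 0 := by
      rcases hg.lt_or_eq with h | h
      · rw [Real.rpow_def_of_neg (by nlinarith [Real.pi_pos])]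
        rw [show -(1:ℝ) / 2 * Real.pi = -(Real.pi / 2) by ring, Real.cos_neg, Real.cos_pi_div_two, mul_zero]
      · rw [h, mul_zero, Real.zero_rpow (by norm_num)]
    rw [this, liminf_eq]
    refine Real.sSup_nonneg' ⟨0, ?_, le_rfl⟩
    exact Eventually.of_forall fun n => mul_nonneg (Real.sqrt_nonneg _) (kol_nonneg _ _)
  · have low := low_lim hd hρ hg
    obtain ⟨c, up⟩ := up_lim hd hρ hg
    have hev : ∀ᶠ n : ℕ in atTop, 0 < vf d ρ n ∧ 2 ≤ n ∧ 6 * ρ < sideLen d n := by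
      filter_upwards [vf_ev hd hρ hg, eventually_ge_atTop 2, side_ev hd (6 * ρ)] with n h1 h2 h3
      exact ⟨h1, h2, h3⟩
    rw [← low.liminf_eq]
    refine liminf_le_liminf ?_ low.isBoundedUnder_ge ?_
    · filter_upwards [hev] with n h'
      have h := kol_bounds hd hρ h'.2.1 h'.2.2 h'.1
      exact mul_le_mul_of_nonneg_left (by linarith [h.1]) (Real.sqrt_nonneg _)
    · refine IsBoundedUnder.isCoboundedUnder_ge ?_
      refine up.isBoundedUnder_le.mono_le ?_
      filter_upwards [hev] with n h'
      have h := kol_bounds hd hρ h'.2.1 h'.2.2 h'.1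
      exact mul_le_mul_of_nonneg_left h.2 (Real.sqrt_nonneg _)

end Final

/-- (3.7) of Theorem 2.3: asymptotic lower bound on `n^{1/2} D_S`. -/
theorem liminf_kolDist_isolCount (d : ℕ) (hd : 1 ≤ d) (ρ : ℝ) (hρ : 0 < ρ) :
    (8 * Real.pi * gS d ρ) ^ (-(1 : ℝ) / 2) ≤
      liminf (fun n : ℕ => Real.sqrt n * kolDist (binppLaw d n) (isolCount d n ρ)) atTop := by
  exact main_aux d hd ρ hρ

end
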